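/- Boundary Lipschitz bound in half-balls. For every integer n ≥ 2, reals 0 < λ ≤ Λ, exponents q > n and p with n ≤ p ≤ q, d₀ ∈ (0,1/4], and K > 0, there exists a constant C > 0 such that the following holds. Let b, f : B₂⁺ → ℝ be continuous with b ≥ 0 and ‖b‖_{L^q(B₂⁺)} ≤ K, and let u be continuous on B₂⁺ ∪ B₂⁰ and C² on B₂⁺, with L⁺[u] ≥ −f in B₂⁺ and u ≤ 0 on B₂⁰. Then u(x) ≤ C·( sup_{B_{3/2}⁺} u⁺ + ‖f⁺‖_{L^{p,q}(B₂⁺)} )·x_n for all x ∈ B₁⁺. -/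

import Mathlib

open MeasureTheory
open scoped ENNReal

/-- The Pucci minimal extremal operator `𝓜⁻(M)` with ellipticity constants `lam ≤ Lam`:
the infimum of `tr(A*M)` over symmetric matrices `A` with `lam•I ≤ A ≤ Lam•I`. -/
noncomputable def pucciMinus (n : ℕ) (lam Lam : ℝ) (M : Matrix (Fin n) (Fin n) ℝ) : ℝ :=
  sInf { t : ℝ | ∃ A : Matrix (Fin n) (Fin n) ℝ, A.IsSymm ∧
    (A - lam • (1 : Matrix (Fin n) (Fin n) ℝ)).PosSemidef ∧
    (Lam • (1 : Matrix (Fin n) (Fin n) ℝ) - A).PosSemidef ∧ t = (A * M).trace }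

/-- The Pucci maximal extremal operator `𝓜⁺(M)`. -/
noncomputable def pucciPlus (n : ℕ) (lam Lam : ℝ) (M : Matrix (Fin n) (Fin n) ℝ) : ℝ :=
  sSup { t : ℝ | ∃ A : Matrix (Fin n) (Fin n) ℝ, A.IsSymm ∧
    (A - lam • (1 : Matrix (Fin n) (Fin n) ℝ)).PosSemidef ∧
    (Lam • (1 : Matrix (Fin n) (Fin n) ℝ) - A).PosSemidef ∧ t = (A * M).trace }

/-- The Hessian matrix `D²u(x)` of `u` at `x`. -/
noncomputable def hess (n : ℕ) (u : EuclideanSpace ℝ (Fin n) → ℝ)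
    (x : EuclideanSpace ℝ (Fin n)) : Matrix (Fin n) (Fin n) ℝ :=
  fun i j => fderiv ℝ (fun y => fderiv ℝ u y (EuclideanSpace.single j (1 : ℝ))) x
    (EuclideanSpace.single i (1 : ℝ))

/-- The euclidean norm `|Du(x)|` of the gradient of `u` at `x`. -/
noncomputable def gradNorm (n : ℕ) (u : EuclideanSpace ℝ (Fin n) → ℝ)
    (x : EuclideanSpace ℝ (Fin n)) : ℝ := ‖fderiv ℝ u x‖

/-- The `L^p` norm `(∫_E |g|^p)^(1/p)`, as a Lebesgue integral valued in `[0,∞]`. -/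
noncomputable def LpNormE (n : ℕ) (p : ℝ) (g : EuclideanSpace ℝ (Fin n) → ℝ)
    (E : Set (EuclideanSpace ℝ (Fin n))) : ℝ≥0∞ :=
  (∫⁻ x in E, ENNReal.ofReal (|g x| ^ p)) ^ (1 / p)

/-- The last (`n`-th) coordinate `x_n` of a point of `ℝⁿ`. -/
def lastC (n : ℕ) (hn : 1 ≤ n) (x : EuclideanSpace ℝ (Fin n)) : ℝ := x ⟨n - 1, by omega⟩

/-- The open half-ball `B_R⁺ = {|x| < R, x_n > 0}`. -/
def halfBall (n : ℕ) (hn : 1 ≤ n) (R : ℝ) : Set (EuclideanSpace ℝ (Fin n)) :=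
  {x | ‖x‖ < R ∧ 0 < lastC n hn x}

/-- The flat boundary part `B_R⁰ = {|x| ≤ R, x_n = 0}`. -/
def flatB (n : ℕ) (hn : 1 ≤ n) (R : ℝ) : Set (EuclideanSpace ℝ (Fin n)) :=
  {x | ‖x‖ ≤ R ∧ lastC n hn x = 0}

/-- The norm `‖g‖_{L^{p,q}(B_R⁺)} = ‖g‖_{L^p(B_R⁺)} + ‖g‖_{L^q(B_R⁺ ∩ {x_n < d0})}`. -/
noncomputable def LpqNormHB (n : ℕ) (hn : 1 ≤ n) (p q d0 R : ℝ)
    (g : EuclideanSpace ℝ (Fin n) → ℝ) : ℝ≥0∞ :=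
  LpNormE n p g (halfBall n hn R) +
    LpNormE n q g {x ∈ halfBall n hn R | lastC n hn x < d0}

/-- The open cube `Q_ρ` of side `ρ` centered at `(0,…,0,ρ/2)`. -/
def cubeQ (n : ℕ) (hn : 1 ≤ n) (ρ : ℝ) : Set (EuclideanSpace ℝ (Fin n)) :=
  {x | (∀ i : Fin n, i.1 ≠ n - 1 → |x i| < ρ / 2) ∧ 0 < lastC n hn x ∧ lastC n hn x < ρ}

/-- The norm `‖g‖_{L^{p,q}(Q₂)} = ‖g‖_{L^p(Q₂)} + ‖g‖_{L^q(Q₂ ∩ {x_n < d0})}`. -/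
noncomputable def LpqNormQ (n : ℕ) (hn : 1 ≤ n) (p q d0 : ℝ)
    (g : EuclideanSpace ℝ (Fin n) → ℝ) : ℝ≥0∞ :=
  LpNormE n p g (cubeQ n hn 2) +
    LpNormE n q g {x ∈ cubeQ n hn 2 | lastC n hn x < d0}

/-!
On a half-ball of radius `r` around a flat boundary point `x₀`, suppose that `u ≤ a x_n + s r`.
Applied to `u - w`, where `w = a x_n + s (|x - x₀|² / r + B x_n (r - x_n) / r)`, the
Alexandrov-Bakelman-Pucci estimate bounds `u` by `w` up to an error of order `r ^ (2 - n / q)`. Here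
`B` is so large that the concavity in `x_n` makes `w` cost nothing for the maximal operator, and
`w ≤ (a + B s) x_n + s r / 4` on the half-ball of radius `r / 2`. If the first radius is small,
halving it thus multiplies the excess `s` by a factor `γ < 1` while the slope `a` only grows by
`B s`. The slopes form a convergent geometric series, so `u ≤ C |x - x₀|` near `x₀`, and `x₀` may be
chosen as the projection of `x` to the flat boundary.
-/

section Matrix

variable {ι : Type*}

lemma isClosed_setOf_posSemidef [Finite ι] : IsClosed {M : Matrix ι ι ℝ | M.PosSemidef} := by
  have := Fintype.ofFinite ι
  simp only [Matrix.posSemidef_iff_dotProduct_mulVec, Matrix.IsHermitian, Set.ofPred_and,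
    Set.ofPred_forall]
  refine (isClosed_eq (by fun_prop) continuous_id).inter (isClosed_iInter fun ξ => ?_)
  exact isClosed_le continuous_const (by fun_prop)

variable [Fintype ι] {A B : Matrix ι ι ℝ}

lemma trace_mul_nonneg_of_posSemidef (hA : A.PosSemidef) (hB : B.PosSemidef) :
    0 ≤ (A * B).trace := by
  classical
  obtain ⟨C, rfl⟩ : ∃ C : Matrix ι ι ℝ, A = C.conjTranspose * C := by
    open scoped MatrixOrder in
    exact CStarAlgebra.nonneg_iff_eq_star_mul_self.mp hA.nonneg
  rw [Matrix.mul_assoc, Matrix.trace_mul_comm]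
  exact (hB.mul_mul_conjTranspose_same C).trace_nonneg

lemma det_le_trace_div_card_pow [DecidableEq ι] (hA : A.PosSemidef) :
    A.det ≤ (A.trace / Fintype.card ι) ^ Fintype.card ι := by
  rcases isEmpty_or_nonempty ι with _ | _
  · simp
  have h_nonneg : ∀ i ∈ Finset.univ, 0 ≤ hA.1.eigenvalues i := fun i _ => hA.eigenvalues_nonneg i
  have h_amgm := Real.geom_mean_le_arith_mean Finset.univ (fun _ => 1) hA.1.eigenvalues
    (fun _ _ => zero_le_one) (by simp [Fintype.card_pos]) h_nonneg
  simp only [Real.rpow_one, one_mul, Finset.sum_const, Finset.card_univ, nsmul_eq_mul,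
    mul_one] at h_amgm
  rw [Real.rpow_inv_le_iff_of_pos (Finset.prod_nonneg h_nonneg)
    (div_nonneg (Finset.sum_nonneg h_nonneg) (by positivity)) (by simp [Fintype.card_pos]),
    Real.rpow_natCast] at h_amgm
  simpa [hA.1.det_eq_prod_eigenvalues, hA.1.trace_eq_sum_eigenvalues] using h_amgm

end Matrix

section SecondDerivative

lemma deriv_deriv_nonpos_of_isLocalMax {φ : ℝ → ℝ} {t : ℝ} (h : IsLocalMax φ t)
    (hφ : ContinuousAt φ t) : deriv (deriv φ) t ≤ 0 := by
  by_contra! h_pos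
  have h_min : IsLocalMin φ t := isLocalMin_of_deriv_deriv_pos h_pos h.deriv_eq_zero hφ
  have h_const : φ =ᶠ[nhds t] fun _ => φ t := by
    filter_upwards [h, h_min] with s h_le h_ge using le_antisymm h_le h_ge
  have h_zero : deriv (deriv φ) t = 0 := by simpa using h_const.deriv.deriv_eq
  exact h_pos.ne' h_zero

lemma fderiv_fderiv_apply_self_nonpos_of_isLocalMax {E : Type*} [NormedAddCommGroup E]
    [NormedSpace ℝ E] {v : E → ℝ} {x : E} (hv : ContDiffAt ℝ 2 v x) (h : IsLocalMax v x) (ξ : E) :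
    fderiv ℝ (fderiv ℝ v) x ξ ξ ≤ 0 := by
  set line : ℝ → E := fun t => x + t • ξ
  have hline : ∀ t, HasDerivAt line ξ t := fun t => by
    simpa only [one_smul, id] using ((hasDerivAt_id t).smul_const ξ).const_add x
  have hline_zero : line 0 = x := by simp [line]
  have hline_tendsto : Filter.Tendsto line (nhds 0) (nhds x) :=
    hline_zero ▸ (hline 0).continuousAt
  have h_deriv : deriv (v ∘ line) =ᶠ[nhds 0] fun t => fderiv ℝ v (line t) ξ := by
    filter_upwards [hline_tendsto.eventually (hv.eventually (by simp))] with t ht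
    exact ((ht.differentiableAt (by simp)).hasFDerivAt.comp_hasDerivAt t (hline t)).deriv
  have h_deriv₂ : HasDerivAt (fun t => fderiv ℝ v (line t) ξ) (fderiv ℝ (fderiv ℝ v) x ξ ξ) 0 := by
    have hD : HasFDerivAt (fderiv ℝ v) (fderiv ℝ (fderiv ℝ v) x) (line 0) := by
      rw [hline_zero]
      exact ((hv.fderiv_right (m := 1) (by norm_num)).differentiableAt (by simp)).hasFDerivAt
    simpa using (hD.comp_hasDerivAt 0 (hline 0)).clm_apply (hasDerivAt_const 0 ξ)
  rw [← h_deriv₂.deriv, ← h_deriv.deriv_eq]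
  refine deriv_deriv_nonpos_of_isLocalMax ?_ ?_
  · filter_upwards [hline_tendsto.eventually h] with t ht
    simpa [hline_zero] using ht
  · exact ContinuousAt.comp (by rw [hline_zero]; exact hv.continuousAt) (hline 0).continuousAt

end SecondDerivative

section Hessian

variable {n : ℕ} {u v : EuclideanSpace ℝ (Fin n) → ℝ} {x : EuclideanSpace ℝ (Fin n)}

lemma hess_apply_of_hasFDerivAt {v' : EuclideanSpace ℝ (Fin n) → EuclideanSpace ℝ (Fin n) →L[ℝ] ℝ}
    {v'' : EuclideanSpace ℝ (Fin n) →L[ℝ] EuclideanSpace ℝ (Fin n) →L[ℝ] ℝ}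
    (hv : ∀ᶠ y in nhds x, HasFDerivAt v (v' y) y) (hv' : HasFDerivAt v' v'' x) (i j : Fin n) :
    hess n v x i j = v'' (EuclideanSpace.single i 1) (EuclideanSpace.single j 1) := by
  have h_partial : (fun y => fderiv ℝ v y (EuclideanSpace.single j 1)) =ᶠ[nhds x]
      fun y => v' y (EuclideanSpace.single j 1) := by
    filter_upwards [hv] with y hy using by rw [hy.fderiv]
  rw [hess, h_partial.fderiv_eq, (hv'.clm_apply (hasFDerivAt_const _ x)).fderiv]
  simp

lemma eventually_hasFDerivAt_of_contDiffAt_two (hv : ContDiffAt ℝ 2 v x) :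
    ∀ᶠ y in nhds x, HasFDerivAt v (fderiv ℝ v y) y := by
  filter_upwards [hv.eventually (by simp)] with y hy
  exact (hy.differentiableAt (by simp)).hasFDerivAt

lemma hasFDerivAt_fderiv_of_contDiffAt_two (hv : ContDiffAt ℝ 2 v x) :
    HasFDerivAt (fderiv ℝ v) (fderiv ℝ (fderiv ℝ v) x) x :=
  ((hv.fderiv_right (m := 1) (by norm_num)).differentiableAt (by simp)).hasFDerivAt

lemma hess_apply (hv : ContDiffAt ℝ 2 v x) (i j : Fin n) :
    hess n v x i j =
      fderiv ℝ (fderiv ℝ v) x (EuclideanSpace.single i 1) (EuclideanSpace.single j 1) :=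
  hess_apply_of_hasFDerivAt (eventually_hasFDerivAt_of_contDiffAt_two hv)
    (hasFDerivAt_fderiv_of_contDiffAt_two hv) i j

lemma hess_sub (hu : ContDiffAt ℝ 2 u x) (hv : ContDiffAt ℝ 2 v x) :
    hess n (u - v) x = hess n u x - hess n v x := by
  ext i j
  have h_fderiv : ∀ᶠ y in nhds x, HasFDerivAt (u - v) ((fderiv ℝ u - fderiv ℝ v) y) y := by
    filter_upwards [eventually_hasFDerivAt_of_contDiffAt_two hu,
      eventually_hasFDerivAt_of_contDiffAt_two hv] with y hu hv using hu.sub hv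
  rw [hess_apply_of_hasFDerivAt h_fderiv ((hasFDerivAt_fderiv_of_contDiffAt_two hu).sub
    (hasFDerivAt_fderiv_of_contDiffAt_two hv)), Matrix.sub_apply, hess_apply hu, hess_apply hv]
  rfl

lemma hess_clm (L : EuclideanSpace ℝ (Fin n) →L[ℝ] ℝ) : hess n L x = 0 := by
  ext i j
  rw [hess_apply_of_hasFDerivAt (.of_forall fun _ => L.hasFDerivAt) (hasFDerivAt_const L x)]
  rfl

lemma isSymm_hess (hv : ContDiffAt ℝ 2 v x) : (hess n v x).IsSymm := by
  ext i j
  rw [Matrix.transpose_apply, hess_apply hv, hess_apply hv]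
  exact hv.isSymmSndFDerivAt (by simp) _ _

lemma toLp_eq_sum_smul_single (ξ : Fin n → ℝ) :
    WithLp.toLp 2 ξ = ∑ i, ξ i • EuclideanSpace.single i (1 : ℝ) := by
  ext j
  simp [Finset.sum_apply, Pi.single_apply]

lemma hess_mulVec_apply (hv : ContDiffAt ℝ 2 v x) (ξ : Fin n → ℝ) (i : Fin n) :
    (hess n v x).mulVec ξ i =
      fderiv ℝ (fderiv ℝ v) x (EuclideanSpace.single i 1) (WithLp.toLp 2 ξ) := by
  simp only [Matrix.mulVec, dotProduct, hess_apply hv, toLp_eq_sum_smul_single, map_sum, map_smul,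
    smul_eq_mul, mul_comm]

lemma dotProduct_hess_mulVec (hv : ContDiffAt ℝ 2 v x) (ξ : Fin n → ℝ) :
    ξ ⬝ᵥ (hess n v x).mulVec ξ =
      fderiv ℝ (fderiv ℝ v) x (WithLp.toLp 2 ξ) (WithLp.toLp 2 ξ) := by
  have h_left : fderiv ℝ (fderiv ℝ v) x (WithLp.toLp 2 ξ) =
      ∑ i, ξ i • fderiv ℝ (fderiv ℝ v) x (EuclideanSpace.single i 1) := by
    simp only [toLp_eq_sum_smul_single, map_sum, map_smul]
  simp [h_left, dotProduct, hess_mulVec_apply hv]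

lemma posSemidef_neg_hess_of_isLocalMax (hv : ContDiffAt ℝ 2 v x) (h : IsLocalMax v x) :
    (-hess n v x).PosSemidef := by
  refine Matrix.PosSemidef.of_dotProduct_mulVec_nonneg ?_ fun ξ => ?_
  · exact Matrix.IsHermitian.neg
      ((Matrix.conjTranspose_eq_transpose_of_trivial _).trans (isSymm_hess hv))
  · rw [star_trivial, Matrix.neg_mulVec, dotProduct_neg, dotProduct_hess_mulVec hv, neg_nonneg]
    exact fderiv_fderiv_apply_self_nonpos_of_isLocalMax hv h _

lemma gradient_apply (v : EuclideanSpace ℝ (Fin n) → ℝ) (x : EuclideanSpace ℝ (Fin n)) (i : Fin n) :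
    gradient v x i = fderiv ℝ v x (EuclideanSpace.single i 1) := by
  rw [gradient, ← InnerProductSpace.toDual_symm_apply, EuclideanSpace.inner_single_right]
  simp

lemma hasFDerivAt_gradient (hv : ContDiffAt ℝ 2 v x) :
    HasFDerivAt (gradient v) (Matrix.toEuclideanCLM (𝕜 := ℝ) (hess n v x)) x := by
  rw [← hasFDerivWithinAt_univ, hasFDerivWithinAt_euclidean]
  intro i
  simp only [gradient_apply, hasFDerivWithinAt_univ]
  refine ((hasFDerivAt_fderiv_of_contDiffAt_two hv).clm_apply
    (hasFDerivAt_const (EuclideanSpace.single i 1) x)).congr_fderiv ?_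
  ext ξ
  have h_comp : (hess n v x).mulVec ξ.ofLp i =
      fderiv ℝ (fderiv ℝ v) x ξ (EuclideanSpace.single i 1) := by
    rw [hess_mulVec_apply hv]
    exact hv.isSymmSndFDerivAt (by simp) _ _
  simpa using h_comp.symm

lemma continuousOn_hess {Ω : Set (EuclideanSpace ℝ (Fin n))} (hΩ : IsOpen Ω)
    (hv : ContDiffOn ℝ 2 v Ω) : ContinuousOn (hess n v) Ω := by
  refine continuousOn_pi.2 fun i => continuousOn_pi.2 fun j => ?_
  have h_fderiv : ContDiffOn ℝ 1 (fderiv ℝ v) Ω := hv.fderiv_of_isOpen hΩ (by norm_num)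
  exact ((h_fderiv.clm_apply contDiffOn_const).continuousOn_fderiv_of_isOpen hΩ (by simp)).clm_apply
    continuousOn_const

end Hessian

section AlexandrovBakelmanPucci

variable {n : ℕ} {v k : EuclideanSpace ℝ (Fin n) → ℝ} {Ω : Set (EuclideanSpace ℝ (Fin n))}
  {x₀ : EuclideanSpace ℝ (Fin n)} {τ : ℝ}

/-- The part of `Ω` where `v` is concave to second order with slope less than `τ`. It contains the
contact set of the Alexandrov-Bakelman-Pucci argument, the points at which a hyperplane of such a
slope touches the graph of `v` from above. -/
def steepConcaveSet (v : EuclideanSpace ℝ (Fin n) → ℝ) (τ : ℝ)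
    (Ω : Set (EuclideanSpace ℝ (Fin n))) : Set (EuclideanSpace ℝ (Fin n)) :=
  {x ∈ Ω | ‖fderiv ℝ v x‖ < τ ∧ (-hess n v x).PosSemidef}

lemma measurableSet_steepConcaveSet (hΩ : IsOpen Ω) (hv : ContDiffOn ℝ 2 v Ω) :
    MeasurableSet (steepConcaveSet v τ Ω) := by
  have h_slope : IsOpen (Ω ∩ (fun x => ‖fderiv ℝ v x‖) ⁻¹' Set.Iio τ) :=
    (hv.continuousOn_fderiv_of_isOpen hΩ (by norm_num)).norm.isOpen_inter_preimage hΩ isOpen_Iio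
  have h_convex : IsOpen (Ω ∩ (fun x => -hess n v x) ⁻¹' {M | M.PosSemidef}ᶜ) :=
    (continuousOn_hess hΩ hv).neg.isOpen_inter_preimage hΩ isClosed_setOf_posSemidef.isOpen_compl
  convert h_slope.measurableSet.diff h_convex.measurableSet using 1
  ext x
  simp only [steepConcaveSet, Set.mem_ofPred_eq, Set.mem_sdiff, Set.mem_inter_iff, Set.mem_preimage,
    Set.mem_Iio, Set.mem_compl_iff]
  tauto

lemma fderiv_eq_and_posSemidef_neg_hess_of_isLocalMax_sub
    {L : EuclideanSpace ℝ (Fin n) →L[ℝ] ℝ} {x : EuclideanSpace ℝ (Fin n)}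
    (hv : ContDiffAt ℝ 2 v x) (h : IsLocalMax (v - ⇑L) x) :
    fderiv ℝ v x = L ∧ (-hess n v x).PosSemidef := by
  have h_deriv : HasFDerivAt (v - ⇑L) (fderiv ℝ v x - L) x :=
    (hv.differentiableAt (by simp)).hasFDerivAt.sub L.hasFDerivAt
  have h_hess : (-hess n (v - ⇑L) x).PosSemidef :=
    posSemidef_neg_hess_of_isLocalMax (hv.sub L.contDiff.contDiffAt) h
  rw [hess_sub hv L.contDiff.contDiffAt, hess_clm, sub_zero] at h_hess
  exact ⟨sub_eq_zero.mp (h.hasFDerivAt_eq_zero h_deriv), h_hess⟩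

lemma exists_isMaxOn_sub_inner (hΩ : IsOpen Ω) (hΩ_bdd : Bornology.IsBounded Ω)
    (hv : ContinuousOn v (closure Ω)) (hv_frontier : ∀ x ∈ frontier Ω, v x ≤ 0) (hx₀ : x₀ ∈ Ω)
    (hτ : Metric.diam Ω * τ < v x₀) {p : EuclideanSpace ℝ (Fin n)} (hp : ‖p‖ < τ) :
    ∃ y ∈ Ω, IsMaxOn (v - ⇑(innerSL ℝ p)) Ω y := by
  obtain ⟨y, hy, hy_max⟩ := hΩ_bdd.isCompact_closure.exists_isMaxOn ⟨x₀, subset_closure hx₀⟩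
    (hv.sub (innerSL ℝ p).continuous.continuousOn)
  refine ⟨y, ?_, hy_max.on_subset subset_closure⟩
  by_contra hyΩ
  have h_frontier : v y ≤ 0 := hv_frontier y (hΩ.frontier_eq ▸ ⟨hy, hyΩ⟩)
  have h_max : v x₀ - inner ℝ p x₀ ≤ v y - inner ℝ p y := hy_max (subset_closure hx₀)
  have h_dist : ‖x₀ - y‖ ≤ Metric.diam Ω := by
    rw [← dist_eq_norm, ← Metric.diam_closure]
    exact Metric.dist_le_diam_of_mem hΩ_bdd.closure (subset_closure hx₀) hy
  have h_inner : inner ℝ p (x₀ - y) ≤ Metric.diam Ω * τ := by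
    refine (real_inner_le_norm _ _).trans ?_
    rw [mul_comm]
    gcongr
  rw [inner_sub_right] at h_inner
  linarith

lemma ball_subset_gradient_image_steepConcaveSet (hΩ : IsOpen Ω) (hΩ_bdd : Bornology.IsBounded Ω)
    (hv : ContinuousOn v (closure Ω)) (hv₂ : ContDiffOn ℝ 2 v Ω)
    (hv_frontier : ∀ x ∈ frontier Ω, v x ≤ 0) (hx₀ : x₀ ∈ Ω) (hτ : Metric.diam Ω * τ < v x₀) :
    Metric.ball 0 τ ⊆ gradient v '' steepConcaveSet v τ Ω := by
  intro p hp
  rw [mem_ball_zero_iff] at hp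
  obtain ⟨y, hy, hy_max⟩ := exists_isMaxOn_sub_inner hΩ hΩ_bdd hv hv_frontier hx₀ hτ hp
  obtain ⟨h_fderiv, h_hess⟩ := fderiv_eq_and_posSemidef_neg_hess_of_isLocalMax_sub
    (hv₂.contDiffAt (hΩ.mem_nhds hy)) (hy_max.isLocalMax (hΩ.mem_nhds hy))
  refine ⟨y, ⟨hy, ?_, h_hess⟩, ?_⟩
  · rwa [h_fderiv, innerSL_apply_norm]
  · rw [gradient, h_fderiv]
    exact (InnerProductSpace.toDual ℝ _).symm_apply_apply p

lemma volume_ball_le_lintegral_abs_det_hess (hΩ : IsOpen Ω) (hΩ_bdd : Bornology.IsBounded Ω)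
    (hv : ContinuousOn v (closure Ω)) (hv₂ : ContDiffOn ℝ 2 v Ω)
    (hv_frontier : ∀ x ∈ frontier Ω, v x ≤ 0) (hx₀ : x₀ ∈ Ω) (hτ : Metric.diam Ω * τ < v x₀) :
    volume (Metric.ball (0 : EuclideanSpace ℝ (Fin n)) τ) ≤
      ∫⁻ x in steepConcaveSet v τ Ω, ENNReal.ofReal |(hess n v x).det| := by
  have h_det : ∀ x, (Matrix.toEuclideanCLM (𝕜 := ℝ) (hess n v x)).det = (hess n v x).det :=
    fun x => LinearMap.det_toLpLin 2 _
  have h_deriv : ∀ x ∈ steepConcaveSet v τ Ω, HasFDerivWithinAt (gradient v)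
      (Matrix.toEuclideanCLM (𝕜 := ℝ) (hess n v x)) (steepConcaveSet v τ Ω) x := fun x hx =>
    (hasFDerivAt_gradient (hv₂.contDiffAt (hΩ.mem_nhds hx.1))).hasFDerivWithinAt
  simp only [← h_det]
  exact (measure_mono
    (ball_subset_gradient_image_steepConcaveSet hΩ hΩ_bdd hv hv₂ hv_frontier hx₀ hτ)).trans
    (addHaar_image_le_lintegral_abs_det_fderiv volume (measurableSet_steepConcaveSet hΩ hv₂)
      h_deriv)

lemma abs_det_le_pow_of_posSemidef_neg {H : Matrix (Fin n) (Fin n) ℝ} {t : ℝ}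
    (hH : (-H).PosSemidef) (ht : -H.trace ≤ n * t) : |H.det| ≤ |t| ^ n := by
  rcases Nat.eq_zero_or_pos n with rfl | hn
  · simp
  have h_trace : 0 ≤ -H.trace := Matrix.trace_neg H ▸ hH.trace_nonneg
  calc |H.det| = (-H).det := by
        rw [← abs_of_nonneg hH.det_nonneg, Matrix.det_neg, abs_mul, abs_pow]
        simp
    _ ≤ (-H.trace / n) ^ n := by simpa using det_le_trace_div_card_pow hH
    _ ≤ |t| ^ n := by
        gcongr
        rw [div_le_iff₀' (by positivity)]
        exact ht.trans (by gcongr; exact le_abs_self t)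

lemma volume_ball_rpow_le_LpNormE (hn : n ≠ 0) (hΩ : IsOpen Ω) (hΩ_bdd : Bornology.IsBounded Ω)
    (hv : ContinuousOn v (closure Ω)) (hv₂ : ContDiffOn ℝ 2 v Ω)
    (hv_frontier : ∀ x ∈ frontier Ω, v x ≤ 0) (hx₀ : x₀ ∈ Ω) (hτ : Metric.diam Ω * τ < v x₀)
    (hk : ∀ x ∈ steepConcaveSet v τ Ω, -(hess n v x).trace ≤ n * k x) :
    volume (Metric.ball (0 : EuclideanSpace ℝ (Fin n)) τ) ^ (1 / n : ℝ) ≤ LpNormE n n k Ω := by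
  refine ENNReal.rpow_le_rpow ?_ (by positivity)
  calc volume (Metric.ball (0 : EuclideanSpace ℝ (Fin n)) τ)
      ≤ ∫⁻ x in steepConcaveSet v τ Ω, ENNReal.ofReal |(hess n v x).det| :=
        volume_ball_le_lintegral_abs_det_hess hΩ hΩ_bdd hv hv₂ hv_frontier hx₀ hτ
    _ ≤ ∫⁻ x in steepConcaveSet v τ Ω, ENNReal.ofReal (|k x| ^ (n : ℝ)) := by
        refine setLIntegral_mono' (measurableSet_steepConcaveSet hΩ hv₂) fun x hx => ?_
        rw [Real.rpow_natCast]
        gcongr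
        exact abs_det_le_pow_of_posSemidef_neg hx.2.2 (hk x hx)
    _ ≤ ∫⁻ x in Ω, ENNReal.ofReal (|k x| ^ (n : ℝ)) := lintegral_mono_set fun x hx => hx.1

end AlexandrovBakelmanPucci

section LebesgueNorm

variable {n : ℕ} {q r τ t : ℝ} {g k : EuclideanSpace ℝ (Fin n) → ℝ}
  {E E' : Set (EuclideanSpace ℝ (Fin n))} {x : EuclideanSpace ℝ (Fin n)}

lemma LpNormE_eq_eLpNorm' (hq : 0 ≤ q) (g : EuclideanSpace ℝ (Fin n) → ℝ)
    (E : Set (EuclideanSpace ℝ (Fin n))) : LpNormE n q g E = eLpNorm' g q (volume.restrict E) := by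
  simp only [LpNormE, eLpNorm'_eq_lintegral_enorm, Real.enorm_eq_ofReal_abs,
    ENNReal.ofReal_rpow_of_nonneg (abs_nonneg _) hq]

lemma LpNormE_mono_set (hq : 0 ≤ q) (h : E ⊆ E') : LpNormE n q g E ≤ LpNormE n q g E' :=
  ENNReal.rpow_le_rpow (lintegral_mono_set h) (by positivity)

lemma LpNormE_add_le (hq : 1 ≤ q) (hg : AEStronglyMeasurable g (volume.restrict E))
    (hk : AEStronglyMeasurable k (volume.restrict E)) :
    LpNormE n q (g + k) E ≤ LpNormE n q g E + LpNormE n q k E := by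
  simpa only [LpNormE_eq_eLpNorm' (zero_le_one.trans hq)] using eLpNorm'_add_le hg hk hq

lemma LpNormE_const_smul (hq : 0 < q) (ht : 0 ≤ t) :
    LpNormE n q (t • g) E = ENNReal.ofReal t * LpNormE n q g E := by
  simpa only [LpNormE_eq_eLpNorm' hq.le, Real.enorm_eq_ofReal ht] using eLpNorm'_const_smul t hq

lemma LpNormE_le_mul_volume_rpow {p : ℝ} (hp : 0 < p) (hpq : p ≤ q)
    (hg : AEStronglyMeasurable g (volume.restrict E)) :
    LpNormE n p g E ≤ LpNormE n q g E * volume E ^ (1 / p - 1 / q) := by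
  simpa only [LpNormE_eq_eLpNorm' hp.le, LpNormE_eq_eLpNorm' (hp.le.trans hpq),
    Measure.restrict_apply_univ] using eLpNorm'_le_eLpNorm'_mul_rpow_measure_univ hp hpq hg

lemma volume_ball_rpow (hr : 0 < r) (t : ℝ) : volume (Metric.ball x r) ^ t =
    ENNReal.ofReal (r ^ (n * t)) * volume (Metric.ball (0 : EuclideanSpace ℝ (Fin n)) 1) ^ t := by
  rw [Measure.addHaar_ball_of_pos _ _ hr, finrank_euclideanSpace_fin, ENNReal.mul_rpow_of_ne_top
    ENNReal.ofReal_ne_top measure_ball_lt_top.ne, ENNReal.ofReal_rpow_of_pos (by positivity),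
    Real.rpow_natCast_mul hr.le]

/-- The scale-invariant constant of the Alexandrov-Bakelman-Pucci estimate, `|B₁|^(-1/q)`. -/
noncomputable def abpConst (n : ℕ) (q : ℝ) : ℝ :=
  (volume (Metric.ball (0 : EuclideanSpace ℝ (Fin n)) 1) ^ (-(1 / q))).toReal

lemma volume_unitBall_ne_zero : volume (Metric.ball (0 : EuclideanSpace ℝ (Fin n)) 1) ≠ 0 :=
  (Metric.measure_ball_pos _ _ one_pos).ne'

lemma ofReal_abpConst : ENNReal.ofReal (abpConst n q) =
    volume (Metric.ball (0 : EuclideanSpace ℝ (Fin n)) 1) ^ (-(1 / q)) :=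
  ENNReal.ofReal_toReal
    (ENNReal.rpow_ne_top_of_ne_zero volume_unitBall_ne_zero measure_ball_lt_top.ne)

lemma abpConst_pos : 0 < abpConst n q :=
  ENNReal.toReal_pos (by simp [measure_ball_lt_top.ne, volume_unitBall_ne_zero])
    (ENNReal.rpow_ne_top_of_ne_zero volume_unitBall_ne_zero measure_ball_lt_top.ne)

lemma le_mul_LpNormE_of_volume_ball_rpow_le (hn : n ≠ 0) (hq : n ≤ q) (hτ : 0 < τ) (hr : 0 < r)
    (hE : E ⊆ Metric.ball x r) (hk : AEStronglyMeasurable k (volume.restrict E))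
    (h : volume (Metric.ball (0 : EuclideanSpace ℝ (Fin n)) τ) ^ (1 / n : ℝ) ≤ LpNormE n n k E) :
    ENNReal.ofReal τ ≤ ENNReal.ofReal (abpConst n q * r ^ (1 - n / q)) * LpNormE n q k E := by
  have hn_pos : (0 : ℝ) < n := by positivity
  have hq_pos : 0 < q := hn_pos.trans_le hq
  set V := volume (Metric.ball (0 : EuclideanSpace ℝ (Fin n)) 1)
  have hV : V ≠ 0 := volume_unitBall_ne_zero
  have hV_top : V ≠ ⊤ := measure_ball_lt_top.ne
  have h_holder : ENNReal.ofReal τ * V ^ (1 / n : ℝ) ≤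
      LpNormE n q k E * (ENNReal.ofReal (r ^ (1 - n / q)) * V ^ (1 / n - 1 / q : ℝ)) :=
    calc ENNReal.ofReal τ * V ^ (1 / n : ℝ)
        = volume (Metric.ball (0 : EuclideanSpace ℝ (Fin n)) τ) ^ (1 / n : ℝ) := by
          rw [volume_ball_rpow hτ, mul_one_div_cancel hn_pos.ne', Real.rpow_one]
      _ ≤ LpNormE n q k E * volume E ^ (1 / n - 1 / q : ℝ) :=
          h.trans (LpNormE_le_mul_volume_rpow hn_pos hq hk)
      _ ≤ LpNormE n q k E * volume (Metric.ball x r) ^ (1 / n - 1 / q : ℝ) := by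
          gcongr
          exact sub_nonneg.2 (one_div_le_one_div_of_le hn_pos hq)
      _ = LpNormE n q k E * (ENNReal.ofReal (r ^ (1 - n / q)) * V ^ (1 / n - 1 / q : ℝ)) := by
          rw [volume_ball_rpow hr]
          congr 4
          field_simp
  calc ENNReal.ofReal τ = ENNReal.ofReal τ * V ^ (1 / n : ℝ) * V ^ (-(1 / n) : ℝ) := by
        rw [mul_assoc, ← ENNReal.rpow_add _ _ hV hV_top, add_neg_cancel, ENNReal.rpow_zero, mul_one]
    _ ≤ LpNormE n q k E * (ENNReal.ofReal (r ^ (1 - n / q)) * V ^ (1 / n - 1 / q : ℝ)) *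
          V ^ (-(1 / n) : ℝ) := by gcongr
    _ = ENNReal.ofReal (r ^ (1 - n / q)) * V ^ (-(1 / q)) * LpNormE n q k E := by
        rw [show -(1 / q) = (1 / n - 1 / q) + -(1 / n : ℝ) by ring, ENNReal.rpow_add _ _ hV hV_top]
        ring
    _ = ENNReal.ofReal (abpConst n q * r ^ (1 - n / q)) * LpNormE n q k E := by
        rw [mul_comm (abpConst n q), ENNReal.ofReal_mul (by positivity), ofReal_abpConst]

end LebesgueNorm

section Pucci

variable {n : ℕ} {lam Lam : ℝ}

lemma pucciPlus_le {M : Matrix (Fin n) (Fin n) ℝ} {t : ℝ} (hLam : lam ≤ Lam)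
    (h : ∀ A : Matrix (Fin n) (Fin n) ℝ, (A - lam • (1 : Matrix (Fin n) (Fin n) ℝ)).PosSemidef →
      (Lam • (1 : Matrix (Fin n) (Fin n) ℝ) - A).PosSemidef → (A * M).trace ≤ t) :
    pucciPlus n lam Lam M ≤ t := by
  refine csSup_le ⟨_, lam • 1, ?_, ?_, ?_, rfl⟩ ?_
  · simp [Matrix.IsSymm]
  · simpa using Matrix.PosSemidef.zero
  · rw [← sub_smul]
    exact Matrix.PosSemidef.one.smul (sub_nonneg.mpr hLam)
  · rintro _ ⟨A, -, h_lower, h_upper, rfl⟩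
    exact h A h_lower h_upper

lemma trace_mul_le_of_posSemidef_neg {A H : Matrix (Fin n) (Fin n) ℝ}
    (hA : (A - lam • (1 : Matrix (Fin n) (Fin n) ℝ)).PosSemidef) (hH : (-H).PosSemidef) :
    (A * H).trace ≤ lam * H.trace := by
  have h := trace_mul_nonneg_of_posSemidef hA hH
  simp only [Matrix.mul_neg, Matrix.trace_neg, Matrix.sub_mul, Matrix.trace_sub, Matrix.smul_mul,
    Matrix.one_mul, Matrix.trace_smul, smul_eq_mul] at h
  linarith

/-- A multiple `B` for which `tr (A (1 - B • Eᵢᵢ)) ≤ 0` whenever `lam • 1 ≤ A ≤ Lam • 1`, where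
`Eᵢᵢ` is the matrix unit. -/
noncomputable def barrierConst (n : ℕ) (lam Lam : ℝ) : ℝ := n * Lam / lam

lemma barrierConst_nonneg (hlam : 0 < lam) (hLam : lam ≤ Lam) : 0 ≤ barrierConst n lam Lam := by
  have := hlam.trans_le hLam
  rw [barrierConst]
  positivity

lemma trace_mul_one_sub_single_nonpos (hlam : 0 < lam) (hLam : lam ≤ Lam) (i : Fin n)
    {A : Matrix (Fin n) (Fin n) ℝ} (hA : (A - lam • (1 : Matrix (Fin n) (Fin n) ℝ)).PosSemidef)
    (hA' : (Lam • (1 : Matrix (Fin n) (Fin n) ℝ) - A).PosSemidef) :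
    (A * (1 - barrierConst n lam Lam • Matrix.single i i 1)).trace ≤ 0 := by
  have hLam_pos : 0 < Lam := hlam.trans_le hLam
  have h_diag : lam ≤ A i i := by simpa using hA.diag_nonneg (i := i)
  have h_trace : A.trace ≤ n * Lam := by
    have := hA'.trace_nonneg
    simp only [Matrix.trace_sub, Matrix.trace_smul, Matrix.trace_one, Fintype.card_fin,
      smul_eq_mul] at this
    linarith
  calc (A * (1 - barrierConst n lam Lam • Matrix.single i i 1)).trace
      = A.trace - n * Lam / lam * A i i := by
        simp [barrierConst, Matrix.mul_sub, Matrix.trace_sub, Matrix.trace_mul_single, mul_comm,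
          div_eq_mul_inv]
    _ ≤ n * Lam - n * Lam / lam * lam := by gcongr
    _ = 0 := by field_simp; ring

lemma pucciPlus_add_smul_le (hlam : 0 < lam) (hLam : lam ≤ Lam) (i : Fin n)
    {H : Matrix (Fin n) (Fin n) ℝ} (hH : (-H).PosSemidef) {t : ℝ} (ht : 0 ≤ t) :
    pucciPlus n lam Lam (H + t • (1 - barrierConst n lam Lam • Matrix.single i i 1)) ≤
      lam * H.trace := by
  refine pucciPlus_le hLam fun A h_lower h_upper => ?_
  rw [Matrix.mul_add, Matrix.trace_add, Matrix.mul_smul, Matrix.trace_smul, smul_eq_mul]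
  have h_barrier := mul_nonpos_of_nonneg_of_nonpos ht
    (trace_mul_one_sub_single_nonpos hlam hLam i h_lower h_upper)
  linarith [trace_mul_le_of_posSemidef_neg h_lower hH]

end Pucci

section Comparison

/-- The factor by which `‖f‖_{L^q}` bounds the slope of a subsolution in a ball of radius `r`. -/
noncomputable def abpFactor (n : ℕ) (lam q r : ℝ) : ℝ :=
  abpConst n q / (n * lam) * r ^ (1 - n / q)

/-- The subsolutions `u` of `L⁺[u] ≥ -f` in `Ω` with the quantitative data of the estimates:
`‖b‖_{L^q(Ω)} ≤ K` and `‖f‖_{L^q(Ω)} ≤ F`. The coefficients are only required to be measurable. -/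
structure IsPucciSubsolution {n : ℕ} (lam Lam q K F : ℝ) (b f u : EuclideanSpace ℝ (Fin n) → ℝ)
    (Ω : Set (EuclideanSpace ℝ (Fin n))) : Prop where
  contDiffOn : ContDiffOn ℝ 2 u Ω
  drift_nonneg : ∀ x ∈ Ω, 0 ≤ b x
  drift_aestronglyMeasurable : AEStronglyMeasurable b (volume.restrict Ω)
  source_aestronglyMeasurable : AEStronglyMeasurable f (volume.restrict Ω)
  drift_norm_le : LpNormE n q b Ω ≤ ENNReal.ofReal K
  source_norm_le : LpNormE n q f Ω ≤ ENNReal.ofReal F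
  neg_source_le : ∀ x ∈ Ω, -f x ≤ pucciPlus n lam Lam (hess n u x) + b x * gradNorm n u x

variable {n : ℕ} {lam Lam q K F r c τ : ℝ} {b f u w : EuclideanSpace ℝ (Fin n) → ℝ}
  {Ω Ω' : Set (EuclideanSpace ℝ (Fin n))} {x₀ x : EuclideanSpace ℝ (Fin n)}

lemma abpFactor_nonneg (hlam : 0 < lam) (hr : 0 ≤ r) : 0 ≤ abpFactor n lam q r :=
  mul_nonneg (div_nonneg abpConst_pos.le (by positivity)) (Real.rpow_nonneg hr _)

lemma abpFactor_mono (hlam : 0 < lam) (hq : n ≤ q) {r' : ℝ} (hr' : 0 ≤ r') (h : r' ≤ r) :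
    abpFactor n lam q r' ≤ abpFactor n lam q r :=
  mul_le_mul_of_nonneg_left
    (Real.rpow_le_rpow hr' h (sub_nonneg.2 (div_le_one_of_le₀ hq (n.cast_nonneg.trans hq))))
    (div_nonneg abpConst_pos.le (by positivity))

lemma IsPucciSubsolution.mono (hq : 0 ≤ q) (h : IsPucciSubsolution lam Lam q K F b f u Ω)
    (hΩ : Ω' ⊆ Ω) : IsPucciSubsolution lam Lam q K F b f u Ω' where
  contDiffOn := h.contDiffOn.mono hΩ
  drift_nonneg x hx := h.drift_nonneg x (hΩ hx)
  drift_aestronglyMeasurable := h.drift_aestronglyMeasurable.mono_set hΩ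
  source_aestronglyMeasurable := h.source_aestronglyMeasurable.mono_set hΩ
  drift_norm_le := (LpNormE_mono_set hq hΩ).trans h.drift_norm_le
  source_norm_le := (LpNormE_mono_set hq hΩ).trans h.source_norm_le
  neg_source_le x hx := h.neg_source_le x (hΩ hx)

/-- The barriers `w` that may be added to any function concave to second order at no cost for the
maximal operator: `𝓜⁺(H + D²w) ≤ λ tr H` in `Ω` whenever `H ≤ 0`, as for a strict supersolution. -/
structure IsPucciBarrier (lam Lam : ℝ) (w : EuclideanSpace ℝ (Fin n) → ℝ)
    (Ω : Set (EuclideanSpace ℝ (Fin n))) : Prop where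
  contDiff : ContDiff ℝ 2 w
  pucciPlus_add_hess_le : ∀ x ∈ Ω, ∀ H : Matrix (Fin n) (Fin n) ℝ, (-H).PosSemidef →
    pucciPlus n lam Lam (H + hess n w x) ≤ lam * H.trace

lemma IsPucciSubsolution.neg_trace_hess_sub_le (hlam : 0 < lam) (hΩ : IsOpen Ω)
    (hu : IsPucciSubsolution lam Lam q K F b f u Ω) (hw : IsPucciBarrier lam Lam w Ω)
    (hx : x ∈ steepConcaveSet (u - w) τ Ω) (hc : ‖fderiv ℝ w x‖ ≤ c) :
    -(hess n (u - w) x).trace ≤ lam⁻¹ * (f x + (τ + c) * b x) := by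
  obtain ⟨hxΩ, h_slope, h_concave⟩ := hx
  have hux : ContDiffAt ℝ 2 u x := hu.contDiffOn.contDiffAt (hΩ.mem_nhds hxΩ)
  have hwx : ContDiffAt ℝ 2 w x := hw.contDiff.contDiffAt
  have h_grad : gradNorm n u x ≤ τ + c := by
    rw [fderiv_sub (hux.differentiableAt (by simp)) (hwx.differentiableAt (by simp))] at h_slope
    exact (norm_le_norm_sub_add _ (fderiv ℝ w x)).trans (add_le_add h_slope.le hc)
  have h_pucci := hw.pucciPlus_add_hess_le x hxΩ _ h_concave
  rw [hess_sub hux hwx, sub_add_cancel, ← hess_sub hux hwx] at h_pucci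
  rw [le_inv_mul_iff₀ hlam]
  linarith [hu.neg_source_le x hxΩ, mul_le_mul_of_nonneg_left h_grad (hu.drift_nonneg x hxΩ)]

lemma IsPucciSubsolution.LpNormE_source_add_drift_le (hq : 1 ≤ q)
    (hu : IsPucciSubsolution lam Lam q K F b f u Ω) (hF : 0 ≤ F) (hK : 0 ≤ K) {s t : ℝ}
    (hs : 0 ≤ s) (ht : 0 ≤ t) :
    LpNormE n q (s • (f + t • b)) Ω ≤ ENNReal.ofReal (s * (F + t * K)) := by
  have hq_pos : 0 < q := zero_lt_one.trans_le hq
  calc LpNormE n q (s • (f + t • b)) Ω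
      = ENNReal.ofReal s * LpNormE n q (f + t • b) Ω := LpNormE_const_smul hq_pos hs
    _ ≤ ENNReal.ofReal s * (LpNormE n q f Ω + ENNReal.ofReal t * LpNormE n q b Ω) := by
        rw [← LpNormE_const_smul hq_pos ht]
        gcongr
        exact LpNormE_add_le hq hu.source_aestronglyMeasurable
          (hu.drift_aestronglyMeasurable.const_smul t)
    _ ≤ ENNReal.ofReal s * (ENNReal.ofReal F + ENNReal.ofReal t * ENNReal.ofReal K) := by
        gcongr
        exacts [hu.source_norm_le, hu.drift_norm_le]
    _ = ENNReal.ofReal (s * (F + t * K)) := by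
        rw [ENNReal.ofReal_mul hs, ENNReal.ofReal_add hF (by positivity), ENNReal.ofReal_mul ht]

lemma IsPucciSubsolution.slope_le (hn : n ≠ 0) (hq : n ≤ q) (hlam : 0 < lam) (hF : 0 ≤ F)
    (hK : 0 ≤ K) (hr : 0 < r) (hΩ : IsOpen Ω) (hΩr : Ω ⊆ Metric.ball x₀ r)
    (hu : IsPucciSubsolution lam Lam q K F b f u Ω) (hw : IsPucciBarrier lam Lam w Ω)
    (hc : ∀ y ∈ Ω, ‖fderiv ℝ w y‖ ≤ c) (hu_cont : ContinuousOn u (closure Ω))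
    (huw : ∀ y ∈ frontier Ω, u y ≤ w y) (hx : x ∈ Ω) (hτ : 0 < τ)
    (hτ_lt : Metric.diam Ω * τ < u x - w x) :
    τ ≤ abpFactor n lam q r * (F + (τ + c) * K) := by
  have hc₀ : 0 ≤ c := (norm_nonneg _).trans (hc x hx)
  have h_one_le : (1 : ℝ) ≤ n := by exact_mod_cast Nat.one_le_iff_ne_zero.2 hn
  have h_abp := volume_ball_rpow_le_LpNormE (v := u - w)
    (k := ((n : ℝ) * lam)⁻¹ • (f + (τ + c) • b)) hn hΩ (Metric.isBounded_ball.subset hΩr)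
    (hu_cont.sub hw.contDiff.continuous.continuousOn) (hu.contDiffOn.sub hw.contDiff.contDiffOn)
    (fun y hy => sub_nonpos.2 (huw y hy)) hx hτ_lt fun y hy => by
      refine (hu.neg_trace_hess_sub_le hlam hΩ hw hy (hc y hy.1)).trans_eq ?_
      simp only [Pi.smul_apply, Pi.add_apply, smul_eq_mul]
      field_simp
  have h_meas : AEStronglyMeasurable (((n : ℝ) * lam)⁻¹ • (f + (τ + c) • b)) (volume.restrict Ω) :=
    (hu.source_aestronglyMeasurable.add (hu.drift_aestronglyMeasurable.const_smul _)).const_smul _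
  have h_norm := (le_mul_LpNormE_of_volume_ball_rpow_le hn hq hτ hr hΩr h_meas h_abp).trans
    (mul_le_mul_right (hu.LpNormE_source_add_drift_le (h_one_le.trans hq) hF hK
      (by positivity) (by positivity)) _)
  have h_const := abpConst_pos (n := n) (q := q)
  rw [← ENNReal.ofReal_mul (by positivity), ENNReal.ofReal_le_ofReal_iff (by positivity)] at h_norm
  exact h_norm.trans_eq (by rw [abpFactor]; ring)

theorem IsPucciSubsolution.sub_le (hn : n ≠ 0) (hq : n ≤ q) (hlam : 0 < lam) (hF : 0 ≤ F)
    (hK : 0 ≤ K) (hr : 0 < r) (hΩ : IsOpen Ω) (hΩr : Ω ⊆ Metric.ball x₀ r)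
    (hu : IsPucciSubsolution lam Lam q K F b f u Ω) (hw : IsPucciBarrier lam Lam w Ω)
    (hc : ∀ y ∈ Ω, ‖fderiv ℝ w y‖ ≤ c) (hu_cont : ContinuousOn u (closure Ω))
    (huw : ∀ y ∈ frontier Ω, u y ≤ w y)
    (h_small : abpFactor n lam q r * K ≤ 1 / 2) (hx : x ∈ Ω) :
    u x - w x ≤ 4 * r * (abpFactor n lam q r * (F + c * K)) := by
  have hc₀ : 0 ≤ c := (norm_nonneg _).trans (hc x hx)
  set X := abpFactor n lam q r
  have hX : 0 ≤ X := abpFactor_nonneg hlam hr.le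
  by_contra! h_lt
  obtain ⟨τ, hτ_gt, hτ_lt⟩ : ∃ τ, 2 * (X * (F + c * K)) < τ ∧ τ < (u x - w x) / (2 * r) :=
    exists_between (by rw [lt_div_iff₀ (by positivity)]; linarith)
  have hτ : 0 < τ := lt_of_le_of_lt (by positivity) hτ_gt
  have h_diam : Metric.diam Ω * τ < u x - w x := by
    rw [lt_div_iff₀' (by positivity)] at hτ_lt
    refine lt_of_le_of_lt ?_ hτ_lt
    gcongr
    exact (Metric.diam_mono hΩr Metric.isBounded_ball).trans (Metric.diam_ball hr.le)
  have h_slope := hu.slope_le hn hq hlam hF hK hr hΩ hΩr hw hc hu_cont huw hx hτ h_diam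
  linarith [mul_le_mul_of_nonneg_left h_small hτ.le]

end Comparison

section HalfBall

variable {n : ℕ} {i : Fin n} {x₀ x : EuclideanSpace ℝ (Fin n)} {r r' : ℝ}

/-- The open half-ball of radius `r` around `x₀` above the hyperplane `{x i = 0}`. The coordinate
`i` is arbitrary, while `halfBall` is the case `x₀ = 0` of the last coordinate. -/
def openHalfBall (i : Fin n) (x₀ : EuclideanSpace ℝ (Fin n)) (r : ℝ) :
    Set (EuclideanSpace ℝ (Fin n)) :=
  Metric.ball x₀ r ∩ {x | 0 < x i}

/-- The closed counterpart of `openHalfBall`, which includes the flat part of the boundary. -/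
def closedHalfBall (i : Fin n) (x₀ : EuclideanSpace ℝ (Fin n)) (r : ℝ) :
    Set (EuclideanSpace ℝ (Fin n)) :=
  Metric.closedBall x₀ r ∩ {x | 0 ≤ x i}

lemma isOpen_openHalfBall : IsOpen (openHalfBall i x₀ r) :=
  Metric.isOpen_ball.inter (isOpen_lt continuous_const (by fun_prop))

lemma isClosed_closedHalfBall : IsClosed (closedHalfBall i x₀ r) :=
  Metric.isClosed_closedBall.inter (isClosed_le continuous_const (by fun_prop))

lemma openHalfBall_subset_closedHalfBall : openHalfBall i x₀ r ⊆ closedHalfBall i x₀ r :=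
  Set.inter_subset_inter Metric.ball_subset_closedBall
    (Set.ofPred_subset_ofPred.2 fun _ => le_of_lt)

lemma closure_openHalfBall_subset : closure (openHalfBall i x₀ r) ⊆ closedHalfBall i x₀ r :=
  closure_minimal openHalfBall_subset_closedHalfBall isClosed_closedHalfBall

lemma openHalfBall_subset_openHalfBall (h : r ≤ r') :
    openHalfBall i x₀ r ⊆ openHalfBall i x₀ r' :=
  Set.inter_subset_inter_left _ (Metric.ball_subset_ball h)

lemma closedHalfBall_subset_closedHalfBall (h : r ≤ r') :
    closedHalfBall i x₀ r ⊆ closedHalfBall i x₀ r' :=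
  Set.inter_subset_inter_left _ (Metric.closedBall_subset_closedBall h)

lemma eq_zero_or_dist_eq_of_mem_frontier_openHalfBall (hx : x ∈ frontier (openHalfBall i x₀ r)) :
    x i = 0 ∨ dist x x₀ = r := by
  rw [isOpen_openHalfBall.frontier_eq] at hx
  obtain ⟨h_dist, h_coord⟩ := closure_openHalfBall_subset hx.1
  by_contra! h
  exact hx.2 ⟨lt_of_le_of_ne h_dist h.2, lt_of_le_of_ne h_coord h.1.symm⟩

lemma apply_le_dist (hx₀ : x₀ i = 0) : x i ≤ dist x x₀ := by
  simpa [hx₀, dist_eq_norm] using (le_abs_self _).trans (PiLp.norm_apply_le (x - x₀) i)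

end HalfBall

section Barrier

variable {n : ℕ} {lam Lam a s r B : ℝ} {i : Fin n} {x₀ x : EuclideanSpace ℝ (Fin n)}

/-- The quadratic barrier of the half-ball of radius `r` around `x₀`. It dominates `a * x i + s * r`
on the spherical part of the boundary, and `B` is chosen large enough for the concavity in the
direction `i` to outweigh the convexity of `‖x - x₀‖²`. -/
noncomputable def barrier (i : Fin n) (x₀ : EuclideanSpace ℝ (Fin n)) (a s r B : ℝ)
    (x : EuclideanSpace ℝ (Fin n)) : ℝ :=
  a * x i + s * (‖x - x₀‖ ^ 2 / r + B / r * (x i * (r - x i)))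

lemma contDiff_barrier : ContDiff ℝ 2 (barrier i x₀ a s r B) := by
  have h_norm : ContDiff ℝ 2 fun x : EuclideanSpace ℝ (Fin n) => ‖x - x₀‖ ^ 2 :=
    (contDiff_id.sub contDiff_const).norm_sq ℝ
  unfold barrier
  fun_prop

/-- The differential of `barrier`. -/
noncomputable def barrierDeriv (i : Fin n) (x₀ : EuclideanSpace ℝ (Fin n)) (a s r B : ℝ)
    (x : EuclideanSpace ℝ (Fin n)) : EuclideanSpace ℝ (Fin n) →L[ℝ] ℝ :=
  (s * (2 / r)) • innerSL ℝ (x - x₀) +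
    (a + s * (B / r * (r - 2 * x i))) • EuclideanSpace.proj (𝕜 := ℝ) i

lemma hasFDerivAt_barrier (x : EuclideanSpace ℝ (Fin n)) :
    HasFDerivAt (barrier i x₀ a s r B) (barrierDeriv i x₀ a s r B x) x := by
  have h_coord := PiLp.hasFDerivAt_apply (𝕜 := ℝ) 2 x i
  have h_norm : HasFDerivAt (fun y => ‖y - x₀‖ ^ 2) (2 • innerSL ℝ (x - x₀)) x := by
    simpa using ((hasFDerivAt_id x).sub_const x₀).norm_sq
  refine ((h_coord.const_mul a).add (((h_norm.mul_const r⁻¹).add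
    ((h_coord.mul (h_coord.const_sub r)).const_mul (B / r))).const_mul s)).congr_fderiv ?_
  ext ξ
  simp only [barrierDeriv, map_sub, smul_neg, smul_add, add_apply, smul_apply, sub_apply, neg_apply,
    PiLp.proj_apply, smul_eq_mul, coe_innerSL_apply, nsmul_eq_mul, Nat.cast_ofNat]
  ring

lemma fderiv_barrier_apply_single (x : EuclideanSpace ℝ (Fin n)) (j : Fin n) :
    fderiv ℝ (barrier i x₀ a s r B) x (EuclideanSpace.single j 1) =
      s * (2 / r) * (x j - x₀ j) +
        (a + s * (B / r * (r - 2 * x i))) * (if i = j then 1 else 0) := by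
  simp [(hasFDerivAt_barrier x).fderiv, barrierDeriv, EuclideanSpace.inner_single_right]

lemma hess_barrier (i : Fin n) (x₀ : EuclideanSpace ℝ (Fin n)) (a s r B : ℝ)
    (x : EuclideanSpace ℝ (Fin n)) : hess n (barrier i x₀ a s r B) x =
      (s * (2 / r)) • (1 - B • Matrix.single i i 1) := by
  have h_coord (j : Fin n) := PiLp.hasFDerivAt_apply (𝕜 := ℝ) 2 x j
  ext k j
  have h_deriv := (((h_coord j).sub_const (x₀ j)).const_mul (s * (2 / r))).fun_add
    ((((((h_coord i).const_mul 2).const_sub r).const_mul (B / r)).const_mul s).const_add a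
      |>.mul_const (if i = j then 1 else 0))
  unfold hess
  simp only [fderiv_barrier_apply_single]
  rw [h_deriv.fderiv]
  rcases eq_or_ne i j with rfl | hij <;> rcases eq_or_ne i k with rfl | hik
  · simp only [↓reduceIte, smul_neg, one_smul, add_apply, smul_apply, neg_apply, PiLp.proj_apply,
      PiLp.single_eq_same, smul_eq_mul, mul_one, Matrix.smul_single, Matrix.smul_apply,
      Matrix.sub_apply, Matrix.one_apply_eq, Matrix.single_apply_same]
    ring
  all_goals simp [Matrix.one_apply, *, eq_comm]

lemma isPucciBarrier_barrier (hlam : 0 < lam) (hLam : lam ≤ Lam) (hs : 0 ≤ s) (hr : 0 < r)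
    (Ω : Set (EuclideanSpace ℝ (Fin n))) :
    IsPucciBarrier lam Lam (barrier i x₀ a s r (barrierConst n lam Lam)) Ω where
  contDiff := contDiff_barrier
  pucciPlus_add_hess_le x _ H hH := by
    rw [hess_barrier]
    exact pucciPlus_add_smul_le hlam hLam i hH (by positivity)

lemma norm_fderiv_barrier_le (ha : 0 ≤ a) (hs : 0 ≤ s) (hr : 0 < r) (hB : 0 ≤ B) (hx₀ : x₀ i = 0)
    (hx : x ∈ closedHalfBall i x₀ r) :
    ‖fderiv ℝ (barrier i x₀ a s r B) x‖ ≤ a + (2 + B) * s := by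
  obtain ⟨h_dist, h_coord⟩ := hx
  rw [Metric.mem_closedBall] at h_dist
  rw [Set.mem_ofPred_eq] at h_coord
  have h_proj : ‖(EuclideanSpace.proj (𝕜 := ℝ) i : EuclideanSpace ℝ (Fin n) →L[ℝ] ℝ)‖ ≤ 1 :=
    ContinuousLinearMap.opNorm_le_bound _ zero_le_one fun z => by
      simpa using PiLp.norm_apply_le z i
  have h_radial : ‖s * (2 / r)‖ * ‖x - x₀‖ ≤ 2 * s := by
    rw [Real.norm_of_nonneg (by positivity), ← dist_eq_norm]
    calc s * (2 / r) * dist x x₀ ≤ s * (2 / r) * r := by gcongr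
      _ = 2 * s := by field_simp
  have h_slope : |B / r * (r - 2 * x i)| ≤ B := by
    rw [abs_mul, abs_of_nonneg (by positivity : 0 ≤ B / r)]
    calc B / r * |r - 2 * x i| ≤ B / r * r := by
          gcongr
          rw [abs_le]
          constructor <;> linarith [(apply_le_dist hx₀).trans h_dist]
      _ = B := by field_simp
  have h_normal : ‖a + s * (B / r * (r - 2 * x i))‖ ≤ a + s * B := by
    refine (norm_add_le _ _).trans ?_
    rw [Real.norm_of_nonneg ha, norm_mul, Real.norm_of_nonneg hs, Real.norm_eq_abs]
    gcongr
  calc ‖fderiv ℝ (barrier i x₀ a s r B) x‖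
      ≤ ‖s * (2 / r)‖ * ‖x - x₀‖ + ‖a + s * (B / r * (r - 2 * x i))‖ *
          ‖(EuclideanSpace.proj (𝕜 := ℝ) i : EuclideanSpace ℝ (Fin n) →L[ℝ] ℝ)‖ := by
        rw [(hasFDerivAt_barrier x).fderiv, barrierDeriv, ← innerSL_apply_norm ℝ (x - x₀),
          ← norm_smul, ← norm_smul]
        exact norm_add_le _ _
    _ ≤ 2 * s + (a + s * B) * 1 := by gcongr
    _ = a + (2 + B) * s := by ring

lemma le_barrier (hs : 0 ≤ s) (hr : 0 < r) (hB : 0 ≤ B) (hx₀ : x₀ i = 0)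
    (hx : x ∈ closedHalfBall i x₀ r) :
    a * x i + s * (dist x x₀ ^ 2 / r) ≤ barrier i x₀ a s r B x := by
  have h_nonneg : 0 ≤ B / r * (x i * (r - x i)) :=
    mul_nonneg (by positivity) (mul_nonneg hx.2 (sub_nonneg.2 ((apply_le_dist hx₀).trans hx.1)))
  rw [barrier, dist_eq_norm]
  gcongr
  linarith

lemma barrier_le_of_mem_closedHalfBall_half (hs : 0 ≤ s) (hr : 0 < r) (hB : 0 ≤ B)
    (hx : x ∈ closedHalfBall i x₀ (r / 2)) :
    barrier i x₀ a s r B x ≤ (a + B * s) * x i + s * r / 4 := by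
  have h_norm : ‖x - x₀‖ ^ 2 / r ≤ r / 4 := by
    rw [← dist_eq_norm, div_le_iff₀ hr]
    calc dist x x₀ ^ 2 ≤ (r / 2) ^ 2 := by gcongr; exact hx.1
      _ = r / 4 * r := by ring
  have h_coord : B / r * (x i * (r - x i)) ≤ B * x i := by
    calc B / r * (x i * (r - x i)) = B * x i - B / r * x i ^ 2 := by field_simp
      _ ≤ B * x i := sub_le_self _ (by positivity)
  calc barrier i x₀ a s r B x ≤ a * x i + s * (r / 4 + B * x i) := by rw [barrier]; gcongr
    _ = (a + B * s) * x i + s * r / 4 := by ring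

end Barrier

section BoundaryGrowth

variable {n : ℕ} {lam Lam q K F a s σ r r' : ℝ} {b f u : EuclideanSpace ℝ (Fin n) → ℝ}
  {i : Fin n} {x₀ x : EuclideanSpace ℝ (Fin n)}

/-- The subsolutions in the half-ball of radius `r` around `x₀`, continuous up to the boundary, that
are nonpositive on its flat part. -/
structure IsHalfBallSubsolution (lam Lam q K F : ℝ) (b f u : EuclideanSpace ℝ (Fin n) → ℝ)
    (i : Fin n) (x₀ : EuclideanSpace ℝ (Fin n)) (r : ℝ) : Prop extends
    IsPucciSubsolution lam Lam q K F b f u (openHalfBall i x₀ r) where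
  continuousOn : ContinuousOn u (closedHalfBall i x₀ r)
  nonpos_of_apply_eq_zero : ∀ y ∈ closedHalfBall i x₀ r, y i = 0 → u y ≤ 0

lemma IsHalfBallSubsolution.mono_radius (hq : 0 ≤ q)
    (h : IsHalfBallSubsolution lam Lam q K F b f u i x₀ r) (hr : r' ≤ r) :
    IsHalfBallSubsolution lam Lam q K F b f u i x₀ r' where
  toIsPucciSubsolution := h.toIsPucciSubsolution.mono hq (openHalfBall_subset_openHalfBall hr)
  continuousOn := h.continuousOn.mono (closedHalfBall_subset_closedHalfBall hr)
  nonpos_of_apply_eq_zero y hy :=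
    h.nonpos_of_apply_eq_zero y (closedHalfBall_subset_closedHalfBall hr hy)

lemma IsHalfBallSubsolution.sub_barrier_le (hq : n ≤ q) (hlam : 0 < lam) (hLam : lam ≤ Lam)
    (hF : 0 ≤ F) (hK : 0 ≤ K) (hr : 0 < r) (ha : 0 ≤ a) (hs : 0 ≤ s) (hx₀ : x₀ i = 0)
    (hu : IsHalfBallSubsolution lam Lam q K F b f u i x₀ r)
    (hu_le : ∀ y ∈ closedHalfBall i x₀ r, u y ≤ a * y i + s * r)
    (h_small : abpFactor n lam q r * K ≤ 1 / 2) (hx : x ∈ openHalfBall i x₀ r) :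
    u x - barrier i x₀ a s r (barrierConst n lam Lam) x ≤
      4 * r * (abpFactor n lam q r * (F + (a + (2 + barrierConst n lam Lam) * s) * K)) := by
  have hB : 0 ≤ barrierConst n lam Lam := barrierConst_nonneg hlam hLam
  have h_frontier (y : EuclideanSpace ℝ (Fin n)) (hy : y ∈ frontier (openHalfBall i x₀ r)) :
      u y ≤ barrier i x₀ a s r (barrierConst n lam Lam) y := by
    have hy' := closure_openHalfBall_subset hy.1
    refine le_trans ?_ (le_barrier hs hr hB hx₀ hy')
    obtain h_zero | h_dist := eq_zero_or_dist_eq_of_mem_frontier_openHalfBall hy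
    · refine (hu.nonpos_of_apply_eq_zero y hy' h_zero).trans ?_
      rw [h_zero]
      positivity
    · refine (hu_le y hy').trans_eq ?_
      rw [h_dist]
      field_simp
  exact hu.sub_le i.pos.ne' hq hlam hF hK hr isOpen_openHalfBall Set.inter_subset_left
    (isPucciBarrier_barrier hlam hLam hs hr _)
    (fun y hy => norm_fderiv_barrier_le ha hs hr hB hx₀ (openHalfBall_subset_closedHalfBall hy))
    (hu.continuousOn.mono closure_openHalfBall_subset) h_frontier h_small hx

lemma IsHalfBallSubsolution.le_of_mem_closedHalfBall_half (hq : n ≤ q) (hlam : 0 < lam)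
    (hLam : lam ≤ Lam) (hF : 0 ≤ F) (hK : 0 ≤ K) (hr : 0 < r) (ha : 0 ≤ a) (hs : 0 ≤ s)
    (hx₀ : x₀ i = 0) (hu : IsHalfBallSubsolution lam Lam q K F b f u i x₀ r)
    (hu_le : ∀ y ∈ closedHalfBall i x₀ r, u y ≤ a * y i + s * r)
    (h_small : abpFactor n lam q r * K ≤ 1 / 2)
    (h_error : 32 * (abpFactor n lam q r * (F + (a + (2 + barrierConst n lam Lam) * s) * K)) ≤ s)
    (hx : x ∈ closedHalfBall i x₀ (r / 2)) :
    u x ≤ (a + barrierConst n lam Lam * s) * x i + 3 / 4 * s * (r / 2) := by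
  have hB : 0 ≤ barrierConst n lam Lam := barrierConst_nonneg hlam hLam
  obtain h_flat | h_inner := eq_or_lt_of_le (show 0 ≤ x i from hx.2)
  · have hx' := closedHalfBall_subset_closedHalfBall (half_le_self hr.le) hx
    refine (hu.nonpos_of_apply_eq_zero x hx' h_flat.symm).trans ?_
    rw [← h_flat]
    positivity
  · have h_sub := hu.sub_barrier_le hq hlam hLam hF hK hr ha hs hx₀ hu_le h_small
      ⟨lt_of_le_of_lt hx.1 (half_lt_self hr), h_inner⟩
    have h_barrier := barrier_le_of_mem_closedHalfBall_half (a := a) hs hr hB hx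
    linarith [mul_le_mul_of_nonneg_right h_error hr.le]

/-- The factor by which the excess `s` over a linear function contracts when the radius of the
half-ball is halved: `3/4` comes from the barrier, the other term from the scaling of the error. -/
noncomputable def decayRatio (n : ℕ) (q : ℝ) : ℝ := max (3 / 4) ((1 / 2) ^ (1 - n / q))

/-- The limit, for initial excess `1`, of the slopes of the linear functions produced by repeatedly
halving the half-ball: the sum of a geometric series of ratio `decayRatio n q`. -/
noncomputable def limitSlope (n : ℕ) (lam Lam q : ℝ) : ℝ :=
  barrierConst n lam Lam / (1 - decayRatio n q)

lemma decayRatio_pos : 0 < decayRatio n q :=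
  lt_max_of_lt_left (by norm_num)

lemma decayRatio_lt_one (hn : n ≠ 0) (hq : n < q) : decayRatio n q < 1 := by
  have hq_pos : 0 < q := (Nat.cast_pos.2 (Nat.pos_of_ne_zero hn)).trans hq
  refine max_lt (by norm_num) (Real.rpow_lt_one (by norm_num) (by norm_num) ?_)
  rwa [sub_pos, div_lt_one hq_pos]

lemma limitSlope_nonneg (hn : n ≠ 0) (hq : n < q) (hlam : 0 < lam) (hLam : lam ≤ Lam) :
    0 ≤ limitSlope n lam Lam q :=
  div_nonneg (barrierConst_nonneg hlam hLam) (sub_nonneg.2 (decayRatio_lt_one hn hq).le)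

lemma limitSlope_mul_one_sub_decayRatio (hn : n ≠ 0) (hq : n < q) :
    limitSlope n lam Lam q * (1 - decayRatio n q) = barrierConst n lam Lam :=
  div_mul_cancel₀ _ (sub_pos.2 (decayRatio_lt_one hn hq)).ne'

lemma abpFactor_div_two_pow_le (hlam : 0 < lam) (hr : 0 ≤ r) (k : ℕ) :
    abpFactor n lam q (r / 2 ^ k) ≤ decayRatio n q ^ k * abpFactor n lam q r := by
  have h_scale : abpFactor n lam q (r / 2 ^ k) =
      ((1 / 2) ^ (1 - n / q) : ℝ) ^ k * abpFactor n lam q r := by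
    rw [abpFactor, abpFactor, div_eq_mul_one_div r, ← one_div_pow,
      Real.mul_rpow hr (by positivity), Real.rpow_pow_comm (by norm_num)]
    ring
  rw [h_scale]
  gcongr
  · exact abpFactor_nonneg hlam hr
  · exact le_max_right _ _

/-- A bound, relative to the initial excess, for the slopes `a + (2 + B) * s` of all the barriers
used in the repeated halving. -/
noncomputable def slopeConst (n : ℕ) (lam Lam q : ℝ) : ℝ :=
  limitSlope n lam Lam q + (2 + barrierConst n lam Lam)

lemma two_le_slopeConst (hn : n ≠ 0) (hq : n < q) (hlam : 0 < lam) (hLam : lam ≤ Lam) :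
    2 ≤ slopeConst n lam Lam q := by
  have hA := limitSlope_nonneg hn hq hlam hLam
  have hB := barrierConst_nonneg (n := n) hlam hLam
  rw [slopeConst]
  linarith

lemma abpFactor_mul_le_half (hn : n ≠ 0) (hq : n < q) (hlam : 0 < lam) (hLam : lam ≤ Lam)
    (hK : 0 ≤ K) (hr : 0 ≤ r)
    (h_small : 32 * abpFactor n lam q r * (1 + slopeConst n lam Lam q * K) ≤ 1) :
    abpFactor n lam q r * K ≤ 1 / 2 := by
  have hX : 0 ≤ abpFactor n lam q r := abpFactor_nonneg hlam hr
  have h_slope : 2 * K ≤ slopeConst n lam Lam q * K := by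
    gcongr
    exact two_le_slopeConst hn hq hlam hLam
  linarith [mul_le_mul_of_nonneg_left h_slope hX, mul_nonneg hX hK]

lemma abpFactor_div_two_pow_error_le (hn : n ≠ 0) (hq : n < q) (hlam : 0 < lam) (hLam : lam ≤ Lam)
    (hF : 0 ≤ F) (hK : 0 ≤ K) (hr : 0 ≤ r) (hFσ : F ≤ σ)
    (h_small : 32 * abpFactor n lam q r * (1 + slopeConst n lam Lam q * K) ≤ 1) (k : ℕ) :
    32 * (abpFactor n lam q (r / 2 ^ k) * (F + (limitSlope n lam Lam q * σ *
      (1 - decayRatio n q ^ k) + (2 + barrierConst n lam Lam) * (σ * decayRatio n q ^ k)) * K)) ≤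
      σ * decayRatio n q ^ k := by
  have hσ : 0 ≤ σ := hF.trans hFσ
  have hA : 0 ≤ limitSlope n lam Lam q := limitSlope_nonneg hn hq hlam hLam
  have hB : 0 ≤ barrierConst n lam Lam := barrierConst_nonneg hlam hLam
  have hX : 0 ≤ abpFactor n lam q r := abpFactor_nonneg hlam hr
  have hγ : 0 ≤ decayRatio n q ^ k := pow_nonneg decayRatio_pos.le k
  have hγ_le : decayRatio n q ^ k ≤ 1 := pow_le_one₀ decayRatio_pos.le (decayRatio_lt_one hn hq).le
  have _ : 0 ≤ 1 - decayRatio n q ^ k := sub_nonneg.2 hγ_le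
  calc 32 * (abpFactor n lam q (r / 2 ^ k) * (F + (limitSlope n lam Lam q * σ *
        (1 - decayRatio n q ^ k) + (2 + barrierConst n lam Lam) * (σ * decayRatio n q ^ k)) * K))
      ≤ 32 * (decayRatio n q ^ k * abpFactor n lam q r * (σ + (limitSlope n lam Lam q * σ * 1 +
          (2 + barrierConst n lam Lam) * (σ * 1)) * K)) := by
        gcongr
        · exact abpFactor_div_two_pow_le hlam hr k
        · linarith
    _ = 32 * abpFactor n lam q r * (1 + slopeConst n lam Lam q * K) *
          (σ * decayRatio n q ^ k) := by rw [slopeConst]; ring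
    _ ≤ σ * decayRatio n q ^ k := mul_le_of_le_one_left (by positivity) h_small

lemma IsHalfBallSubsolution.le_of_mem_closedHalfBall_div_two_pow (hq : n < q) (hlam : 0 < lam)
    (hLam : lam ≤ Lam) (hF : 0 ≤ F) (hK : 0 ≤ K) (hr : 0 < r) (hx₀ : x₀ i = 0)
    (hu : IsHalfBallSubsolution lam Lam q K F b f u i x₀ r)
    (hu_le : ∀ y ∈ closedHalfBall i x₀ r, u y ≤ σ * r) (hFσ : F ≤ σ)
    (h_small : 32 * abpFactor n lam q r * (1 + slopeConst n lam Lam q * K) ≤ 1) (k : ℕ) :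
    ∀ x ∈ closedHalfBall i x₀ (r / 2 ^ k), u x ≤
      limitSlope n lam Lam q * σ * (1 - decayRatio n q ^ k) * x i +
        σ * decayRatio n q ^ k * (r / 2 ^ k) := by
  have hn : n ≠ 0 := i.pos.ne'
  have hσ : 0 ≤ σ := hF.trans hFσ
  have hγ : 0 ≤ decayRatio n q := decayRatio_pos.le
  have hA : 0 ≤ limitSlope n lam Lam q := limitSlope_nonneg hn hq hlam hLam
  induction k with
  | zero => simpa using hu_le
  | succ k ih =>
    intro x hx
    have h_half : r / 2 ^ (k + 1) = r / 2 ^ k / 2 := by rw [pow_succ, div_div]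
    have h_radius : r / 2 ^ k ≤ r := div_le_self hr.le (one_le_pow₀ one_le_two)
    have h_slope : 0 ≤ limitSlope n lam Lam q * σ * (1 - decayRatio n q ^ k) :=
      mul_nonneg (by positivity) (sub_nonneg.2 (pow_le_one₀ hγ (decayRatio_lt_one hn hq).le))
    have h_factor : abpFactor n lam q (r / 2 ^ k) * K ≤ 1 / 2 :=
      (mul_le_mul_of_nonneg_right (abpFactor_mono hlam hq.le (by positivity) h_radius) hK).trans
        (abpFactor_mul_le_half hn hq hlam hLam hK hr.le h_small)
    rw [h_half] at hx ⊢
    calc u x ≤ (limitSlope n lam Lam q * σ * (1 - decayRatio n q ^ k) +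
            barrierConst n lam Lam * (σ * decayRatio n q ^ k)) * x i +
          3 / 4 * (σ * decayRatio n q ^ k) * (r / 2 ^ k / 2) :=
          (hu.mono_radius (n.cast_nonneg.trans hq.le) h_radius).le_of_mem_closedHalfBall_half hq.le
            hlam hLam hF hK (by positivity) h_slope (by positivity) hx₀ ih h_factor
            (abpFactor_div_two_pow_error_le hn hq hlam hLam hF hK hr.le hFσ h_small k) hx
      _ ≤ (limitSlope n lam Lam q * σ * (1 - decayRatio n q ^ k) +
            barrierConst n lam Lam * (σ * decayRatio n q ^ k)) * x i +
          decayRatio n q * (σ * decayRatio n q ^ k) * (r / 2 ^ k / 2) := by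
          gcongr
          exact le_max_left _ _
      _ = limitSlope n lam Lam q * σ * (1 - decayRatio n q ^ (k + 1)) * x i +
          σ * decayRatio n q ^ (k + 1) * (r / 2 ^ k / 2) := by
          rw [← limitSlope_mul_one_sub_decayRatio hn hq]
          ring

lemma IsHalfBallSubsolution.le_mul_dist (hq : n < q) (hlam : 0 < lam) (hLam : lam ≤ Lam)
    (hF : 0 ≤ F) (hK : 0 ≤ K) (hr : 0 < r) (hx₀ : x₀ i = 0)
    (hu : IsHalfBallSubsolution lam Lam q K F b f u i x₀ r)
    (hu_le : ∀ y ∈ closedHalfBall i x₀ r, u y ≤ σ * r) (hFσ : F ≤ σ)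
    (h_small : 32 * abpFactor n lam q r * (1 + slopeConst n lam Lam q * K) ≤ 1)
    (hx : x ∈ closedHalfBall i x₀ r) :
    u x ≤ (limitSlope n lam Lam q + 2) * σ * dist x x₀ := by
  have hn : n ≠ 0 := i.pos.ne'
  have hσ : 0 ≤ σ := hF.trans hFσ
  have hA : 0 ≤ limitSlope n lam Lam q := limitSlope_nonneg hn hq hlam hLam
  have hγ : 0 ≤ decayRatio n q := decayRatio_pos.le
  have hγ_le : decayRatio n q ≤ 1 := (decayRatio_lt_one hn hq).le
  obtain rfl | h_ne := eq_or_ne x x₀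
  · simpa using hu.nonpos_of_apply_eq_zero x hx hx₀
  obtain ⟨k, hk_lt, hk_le⟩ : ∃ k : ℕ, (1 / 2) ^ (k + 1) < dist x x₀ / r ∧
      dist x x₀ / r ≤ (1 / 2) ^ k :=
    exists_nat_pow_near_of_lt_one (div_pos (dist_pos.2 h_ne) hr) (div_le_one_of_le₀ hx.1 hr.le)
      (by norm_num) (by norm_num)
  rw [lt_div_iff₀ hr, pow_succ, one_div_pow] at hk_lt
  rw [div_le_iff₀ hr, one_div_pow, one_div_mul_eq_div] at hk_le
  have h_radius : r / 2 ^ k ≤ 2 * dist x x₀ := by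
    linarith [one_div_mul_eq_div ((2 : ℝ) ^ k) r]
  calc u x ≤ limitSlope n lam Lam q * σ * (1 - decayRatio n q ^ k) * x i +
        σ * decayRatio n q ^ k * (r / 2 ^ k) :=
        hu.le_of_mem_closedHalfBall_div_two_pow hq hlam hLam hF hK hr hx₀ hu_le hFσ h_small k x
          ⟨hk_le, hx.2⟩
    _ ≤ limitSlope n lam Lam q * σ * 1 * dist x x₀ + σ * 1 * (2 * dist x x₀) := by
        have h_coord : 0 ≤ x i := hx.2
        gcongr
        · linarith [pow_nonneg hγ k]
        · exact apply_le_dist hx₀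
        · exact pow_le_one₀ hγ hγ_le
    _ = (limitSlope n lam Lam q + 2) * σ * dist x x₀ := by ring

lemma exists_pos_abpFactor_mul_le_one (hn : n ≠ 0) (hq : n < q) {ρ : ℝ} (hρ : 0 < ρ) (M : ℝ) :
    ∃ r, 0 < r ∧ r ≤ ρ ∧ abpFactor n lam q r * M ≤ 1 := by
  have hq_pos : 0 < q := (Nat.cast_pos.2 (Nat.pos_of_ne_zero hn)).trans hq
  have h_exp : 0 < 1 - n / q := sub_pos.2 ((div_lt_one hq_pos).2 hq)
  have h_lim : Filter.Tendsto (fun r => abpFactor n lam q r * M) (nhdsWithin 0 (Set.Ioi 0))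
      (nhds 0) := by
    have h_cont : Continuous fun r : ℝ => abpFactor n lam q r * M :=
      (continuous_const.mul (Real.continuous_rpow_const h_exp.le)).mul_const M
    simpa [abpFactor, Real.zero_rpow h_exp.ne'] using
      (h_cont.tendsto 0).mono_left nhdsWithin_le_nhds
  obtain ⟨r, h_le, hr_pos, hr_le⟩ :=
    ((h_lim.eventually_le_const one_pos).and (Ioc_mem_nhdsGT hρ)).exists
  exact ⟨r, hr_pos, hr_le, h_le⟩

theorem exists_forall_isHalfBallSubsolution_le_mul_dist (hq : n < q) (hlam : 0 < lam)
    (hLam : lam ≤ Lam) (hK : 0 ≤ K) (i : Fin n) {ρ : ℝ} (hρ : 0 < ρ) :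
    ∃ r, 0 < r ∧ r ≤ ρ ∧ ∃ C, 1 ≤ C ∧ ∀ (b f u : EuclideanSpace ℝ (Fin n) → ℝ) (F S : ℝ)
      (x₀ : EuclideanSpace ℝ (Fin n)), 0 ≤ F → 0 ≤ S → x₀ i = 0 →
      IsHalfBallSubsolution lam Lam q K F b f u i x₀ r →
      (∀ y ∈ closedHalfBall i x₀ r, u y ≤ S) →
      ∀ x ∈ closedHalfBall i x₀ r, u x ≤ C * (S / r + F) * dist x x₀ := by
  have hn : n ≠ 0 := i.pos.ne'
  obtain ⟨r, hr, hrρ, h_small⟩ := exists_pos_abpFactor_mul_le_one (lam := lam) hn hq hρ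
    (32 * (1 + slopeConst n lam Lam q * K))
  have hA : 0 ≤ limitSlope n lam Lam q := limitSlope_nonneg hn hq hlam hLam
  refine ⟨r, hr, hrρ, limitSlope n lam Lam q + 2, by linarith, ?_⟩
  intro b f u F S x₀ hF hS hx₀ hu hu_le x hx
  refine hu.le_mul_dist hq hlam hLam hF hK hr hx₀ (fun y hy => ?_)
    (le_add_of_nonneg_left (by positivity)) (by linarith) hx
  calc u y ≤ S := hu_le y hy
    _ = S / r * r := (div_mul_cancel₀ _ hr.ne').symm
    _ ≤ (S / r + F) * r := by gcongr; exact le_add_of_nonneg_right hF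

end BoundaryGrowth

section BoundaryLayer

/-- The index of the coordinate `lastC`. -/
def lastIndex (n : ℕ) (hn : 1 ≤ n) : Fin n := ⟨n - 1, Nat.sub_lt hn one_pos⟩

/-- The part of the half-ball `B_R⁺` below height `d0`. -/
def boundaryLayer (n : ℕ) (hn : 1 ≤ n) (R d0 : ℝ) : Set (EuclideanSpace ℝ (Fin n)) :=
  {x ∈ halfBall n hn R | lastC n hn x < d0}

variable {n : ℕ} {hn : 1 ≤ n} {r R d0 : ℝ} {x x₀ : EuclideanSpace ℝ (Fin n)}

lemma measurableSet_boundaryLayer : MeasurableSet (boundaryLayer n hn R d0) := by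
  have h_coord : Measurable (lastC n hn) := (measurable_pi_apply _).comp (by fun_prop)
  exact ((measurableSet_lt measurable_norm measurable_const).inter
    (measurableSet_lt measurable_const h_coord)).inter (measurableSet_lt h_coord measurable_const)

lemma norm_lt_of_dist_le (hx : dist x x₀ ≤ r) (h : ‖x₀‖ + r < R) : ‖x‖ < R := by
  rw [dist_eq_norm] at hx
  linarith [norm_le_norm_add_norm_sub' x x₀]

lemma closedHalfBall_subset_halfBall_union_flatB (h : ‖x₀‖ + r < R) :
    closedHalfBall (lastIndex n hn) x₀ r ⊆ halfBall n hn R ∪ flatB n hn R := fun _ hx =>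
  have h_norm := norm_lt_of_dist_le hx.1 h
  (lt_or_eq_of_le (show 0 ≤ lastC n hn _ from hx.2)).imp (⟨h_norm, ·⟩) (⟨h_norm.le, ·.symm⟩)

lemma openHalfBall_subset_boundaryLayer (hx₀ : lastC n hn x₀ = 0) (h : ‖x₀‖ + r < R)
    (hr : r ≤ d0) : openHalfBall (lastIndex n hn) x₀ r ⊆ boundaryLayer n hn R d0 := fun _ hx =>
  ⟨⟨norm_lt_of_dist_le hx.1.le h, hx.2⟩, ((apply_le_dist hx₀).trans_lt hx.1).trans_le hr⟩

lemma norm_sub_single_apply_le (x : EuclideanSpace ℝ (Fin n)) (i : Fin n) :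
    ‖x - EuclideanSpace.single i (x i)‖ ≤ ‖x‖ := by
  rw [EuclideanSpace.norm_eq, EuclideanSpace.norm_eq]
  gcongr with j
  obtain rfl | hj := eq_or_ne j i <;> simp [*]

lemma le_sSup_posPart_image_halfBall {u : EuclideanSpace ℝ (Fin n) → ℝ} (h : r < R)
    (hu : ContinuousOn u (halfBall n hn R ∪ flatB n hn R)) (hx : x ∈ halfBall n hn r) :
    u x ≤ sSup ((fun y => max (u y) 0) '' halfBall n hn r) := by
  have h_compact : IsCompact (closedHalfBall (lastIndex n hn) 0 r) :=
    (isCompact_closedBall 0 r).of_isClosed_subset isClosed_closedHalfBall Set.inter_subset_left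
  have h_cont : ContinuousOn (fun y => max (u y) 0) (closedHalfBall (lastIndex n hn) 0 r) :=
    (hu.mono (closedHalfBall_subset_halfBall_union_flatB (by simpa using h))).sup
      continuousOn_const
  have h_subset : halfBall n hn r ⊆ closedHalfBall (lastIndex n hn) 0 r := fun y hy =>
    ⟨mem_closedBall_zero_iff.2 hy.1.le, (show 0 < lastC n hn y from hy.2).le⟩
  have h_bdd : BddAbove ((fun y => max (u y) 0) '' halfBall n hn r) :=
    (h_compact.bddAbove_image h_cont).mono (Set.image_mono h_subset)
  exact (le_max_left _ _).trans (le_csSup h_bdd ⟨x, hx, rfl⟩)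

lemma IsPucciSubsolution.isHalfBallSubsolution {lam Lam q K F : ℝ}
    {b f u : EuclideanSpace ℝ (Fin n) → ℝ} (hq : 0 ≤ q)
    (hu : IsPucciSubsolution lam Lam q K F b f u (boundaryLayer n hn R d0))
    (hu_cont : ContinuousOn u (halfBall n hn R ∪ flatB n hn R))
    (hu_flat : ∀ y ∈ flatB n hn R, u y ≤ 0) (hx₀ : lastC n hn x₀ = 0) (h : ‖x₀‖ + r < R)
    (hr : r ≤ d0) : IsHalfBallSubsolution lam Lam q K F b f u (lastIndex n hn) x₀ r where
  toIsPucciSubsolution := hu.mono hq (openHalfBall_subset_boundaryLayer hx₀ h hr)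
  continuousOn := hu_cont.mono (closedHalfBall_subset_halfBall_union_flatB h)
  nonpos_of_apply_eq_zero y hy h_zero := hu_flat y ⟨(norm_lt_of_dist_le hy.1 h).le, h_zero⟩

lemma exists_forall_isPucciSubsolution_le_mul_lastC {lam Lam q K : ℝ} (hlam : 0 < lam)
    (hLam : lam ≤ Lam) (hq : n < q) (hd0 : 0 < d0) (hK : 0 ≤ K) :
    ∃ C, 0 < C ∧ ∀ (b f u : EuclideanSpace ℝ (Fin n) → ℝ) (F S : ℝ), 0 ≤ F → 0 ≤ S →
      IsPucciSubsolution lam Lam q K F b f u (boundaryLayer n hn 2 d0) →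
      ContinuousOn u (halfBall n hn 2 ∪ flatB n hn 2) →
      (∀ y ∈ flatB n hn 2, u y ≤ 0) → (∀ y ∈ halfBall n hn (3 / 2), u y ≤ S) →
      ∀ x ∈ halfBall n hn 1, u x ≤ C * (S + F) * lastC n hn x := by
  obtain ⟨r, hr, hr_le, C, hC, h_growth⟩ := exists_forall_isHalfBallSubsolution_le_mul_dist hq hlam
    hLam hK (lastIndex n hn) (lt_min hd0 (by norm_num : (0 : ℝ) < 1 / 4))
  have hr_quarter : r ≤ 1 / 4 := hr_le.trans (min_le_right _ _)
  refine ⟨C / r, by positivity, fun b f u F S hF hS hu hu_cont hu_flat hu_le x hx => ?_⟩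
  set x₀ := x - EuclideanSpace.single (lastIndex n hn) (lastC n hn x)
  have hx_pos : 0 < lastC n hn x := hx.2
  have hx₀ : lastC n hn x₀ = 0 := by simp [x₀, lastC, lastIndex]
  have hx₀_norm : ‖x₀‖ < 1 := (norm_sub_single_apply_le x (lastIndex n hn)).trans_lt hx.1
  have h_dist : dist x x₀ = lastC n hn x := by simp [x₀, abs_of_pos hx_pos]
  have h_bound : u x ≤ C * (S / r + F) * lastC n hn x := by
    obtain hxr | hxr := le_total (lastC n hn x) r
    · rw [← h_dist]
      have hu_le' (y : EuclideanSpace ℝ (Fin n)) (hy : y ∈ closedHalfBall (lastIndex n hn) x₀ r) :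
          u y ≤ S := by
        obtain hy' | ⟨hy_norm, hy_zero⟩ := closedHalfBall_subset_halfBall_union_flatB
          (by linarith : ‖x₀‖ + r < 3 / 2) hy
        exacts [hu_le y hy', (hu_flat y ⟨hy_norm.trans (by norm_num), hy_zero⟩).trans hS]
      exact h_growth b f u F S x₀ hF hS hx₀ (hu.isHalfBallSubsolution (n.cast_nonneg.trans hq.le)
        hu_cont hu_flat hx₀ (by linarith) (hr_le.trans (min_le_left _ _))) hu_le' x
        ⟨h_dist.trans_le hxr, hx_pos.le⟩
    · calc u x ≤ S := hu_le x ⟨hx.1.trans (by norm_num), hx_pos⟩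
        _ = S / r * r := (div_mul_cancel₀ _ hr.ne').symm
        _ ≤ (S / r + F) * lastC n hn x := by gcongr; exact le_add_of_nonneg_right hF
        _ ≤ C * (S / r + F) * lastC n hn x := by
          gcongr
          exact le_mul_of_one_le_left (by positivity) hC
  calc u x ≤ C * (S / r + F) * lastC n hn x := h_bound
    _ ≤ C * (S / r + F / r) * lastC n hn x := by
        gcongr
        exact le_div_self hF hr (by linarith)
    _ = C / r * (S + F) * lastC n hn x := by ring

end BoundaryLayer

theorem boundary_lipschitz_bound_half_ball_general
    (n : ℕ) (hn : 1 ≤ n) (lam Lam : ℝ) (hlam : 0 < lam) (hLam : lam ≤ Lam)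
    (q d0 K : ℝ) (hq : (n : ℝ) < q) (hd0 : 0 < d0) (hK : 0 ≤ K) :
    ∃ C : ℝ, 0 < C ∧
      ∀ b f u : EuclideanSpace ℝ (Fin n) → ℝ,
        AEStronglyMeasurable b (volume.restrict (boundaryLayer n hn 2 d0)) →
        AEStronglyMeasurable f (volume.restrict (boundaryLayer n hn 2 d0)) →
        (∀ x ∈ boundaryLayer n hn 2 d0, 0 ≤ b x) →
        LpNormE n q b (boundaryLayer n hn 2 d0) ≤ ENNReal.ofReal K →
        ContinuousOn u (halfBall n hn 2 ∪ flatB n hn 2) →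
        ContDiffOn ℝ 2 u (boundaryLayer n hn 2 d0) →
        (∀ x ∈ boundaryLayer n hn 2 d0,
          -f x ≤ pucciPlus n lam Lam (hess n u x) + b x * gradNorm n u x) →
        (∀ x ∈ flatB n hn 2, u x ≤ 0) →
        ∀ x ∈ halfBall n hn 1,
          ENNReal.ofReal (u x)
            ≤ ENNReal.ofReal C *
              (ENNReal.ofReal (sSup ((fun y => max (u y) 0) '' halfBall n hn (3 / 2)))
                + LpNormE n q (fun y => max (f y) 0) (boundaryLayer n hn 2 d0)) *
              ENNReal.ofReal (lastC n hn x) := by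
  obtain ⟨C, hC, h_bound⟩ := exists_forall_isPucciSubsolution_le_mul_lastC (hn := hn) hlam hLam hq
    hd0 hK
  refine ⟨C, hC, fun b f u hb hf hb_nonneg hb_norm hu_cont hu h_pde h_flat x hx => ?_⟩
  set S := sSup ((fun y => max (u y) 0) '' halfBall n hn (3 / 2))
  set N := LpNormE n q (fun y => max (f y) 0) (boundaryLayer n hn 2 d0)
  have hS : 0 ≤ S := Real.sSup_nonneg (by rintro _ ⟨y, -, rfl⟩; exact le_max_right _ _)
  have hx_pos : 0 < lastC n hn x := hx.2
  obtain hN | hN := eq_or_ne N ⊤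
  · simp [hN, hC, hx_pos]
  have h_sub : IsPucciSubsolution lam Lam q K N.toReal b (fun y => max (f y) 0) u
      (boundaryLayer n hn 2 d0) :=
    { contDiffOn := hu
      drift_nonneg := hb_nonneg
      drift_aestronglyMeasurable := hb
      source_aestronglyMeasurable := hf.sup aestronglyMeasurable_const
      drift_norm_le := hb_norm
      source_norm_le := (ENNReal.ofReal_toReal hN).ge
      neg_source_le := fun y hy => (neg_le_neg (le_max_left _ _)).trans (h_pde y hy) }
  have h_real := h_bound b _ u N.toReal S ENNReal.toReal_nonneg hS h_sub hu_cont h_flat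
    (fun y hy => le_sSup_posPart_image_halfBall (by norm_num) hu_cont hy) x hx
  calc ENNReal.ofReal (u x) ≤ ENNReal.ofReal (C * (S + N.toReal) * lastC n hn x) :=
        ENNReal.ofReal_le_ofReal h_real
    _ = ENNReal.ofReal C * (ENNReal.ofReal S + N) * ENNReal.ofReal (lastC n hn x) := by
        rw [ENNReal.ofReal_mul (by positivity), ENNReal.ofReal_mul hC.le,
          ENNReal.ofReal_add hS ENNReal.toReal_nonneg, ENNReal.ofReal_toReal hN]

/-- Boundary Lipschitz bound in half-balls. -/
theorem boundary_lipschitz_bound_half_ball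
    (n : ℕ) (hn : 2 ≤ n) (lam Lam : ℝ) (hlam : 0 < lam) (hLam : lam ≤ Lam)
    (p q d0 K : ℝ) (hq : (n : ℝ) < q) (hp : (n : ℝ) ≤ p) (hpq : p ≤ q)
    (hd0 : 0 < d0) (hd0' : d0 ≤ 1 / 4) (hK : 0 < K) :
    ∃ C : ℝ, 0 < C ∧
      ∀ b f u : EuclideanSpace ℝ (Fin n) → ℝ,
        ContinuousOn b (halfBall n (by omega) 2) →
        ContinuousOn f (halfBall n (by omega) 2) →
        (∀ x ∈ halfBall n (by omega) 2, 0 ≤ b x) →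
        LpNormE n q b (halfBall n (by omega) 2) ≤ ENNReal.ofReal K →
        ContinuousOn u (halfBall n (by omega) 2 ∪ flatB n (by omega) 2) →
        ContDiffOn ℝ 2 u (halfBall n (by omega) 2) →
        (∀ x ∈ halfBall n (by omega) 2,
          -f x ≤ pucciPlus n lam Lam (hess n u x) + b x * gradNorm n u x) →
        (∀ x ∈ flatB n (by omega : 1 ≤ n) 2, u x ≤ 0) →
        ∀ x ∈ halfBall n (by omega : 1 ≤ n) 1,
          ENNReal.ofReal (u x)
            ≤ ENNReal.ofReal C *
              (ENNReal.ofReal (sSup ((fun y => max (u y) 0) '' halfBall n (by omega) (3 / 2)))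
                + LpqNormHB n (by omega) p q d0 2 (fun y => max (f y) 0)) *
              ENNReal.ofReal (lastC n (by omega) x) := by
  obtain ⟨C, hC, h_bound⟩ := boundary_lipschitz_bound_half_ball_general n (by omega) lam Lam hlam
    hLam q d0 K hq hd0 hK.le
  have hq_nonneg : 0 ≤ q := n.cast_nonneg.trans hq.le
  have h_layer : boundaryLayer n (by omega) 2 d0 ⊆ halfBall n (by omega) 2 := Set.sep_subset _ _
  refine ⟨C, hC, fun b f u hb hf hb_nonneg hb_norm hu_cont hu h_pde h_flat x hx =>
    (h_bound b f u ((hb.mono h_layer).aestronglyMeasurable measurableSet_boundaryLayer)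
      ((hf.mono h_layer).aestronglyMeasurable measurableSet_boundaryLayer)
      (fun y hy => hb_nonneg y (h_layer hy))
      ((LpNormE_mono_set hq_nonneg h_layer).trans hb_norm) hu_cont (hu.mono h_layer)
      (fun y hy => h_pde y (h_layer hy)) h_flat x hx).trans ?_⟩
  gcongr
  exact le_add_self
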